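/- arXiv:2302.07841 — 2 statements merged into one kernel-verified Lean document; each statement's English description precedes it below -/
import Mathlib

section
/- Maximizer of the Holevo capacity: for every n-qudit state σ, the channel E_σ : ρ ↦ ρ ⊠ σ satisfies χ(E_σ) = n log d if and only if σ is a pure stabilizer state. -/
open scoped BigOperators ComplexOrder Classical ENNReal
open Matrix

namespace PaperQI

/-- The computational-basis index set `ℤ_d^n` for an `n`-qudit system. -/
abbrev QV (d n : ℕ) := Fin n → ZMod d

/-- Matrices (linear operators) on the `n`-qudit Hilbert space `(ℂ^d)^{⊗ n}`,
written in the computational basis indexed by `ℤ_d^n`. -/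
abbrev Mat (d n : ℕ) := Matrix (QV d n) (QV d n) ℂ

/-- The character `ξ^z = exp(2πi z/d)` for `z ∈ ℤ_d`. -/
noncomputable def ch (d : ℕ) (z : ZMod d) : ℂ :=
  Complex.exp (2 * Real.pi * Complex.I * (z.val : ℂ) / (d : ℂ))

/-- Dot product on `ℤ_d^n`. -/
def qdot {d n : ℕ} (p k : QV d n) : ZMod d := ∑ i, p i * k i

/-- The `n`-qudit Weyl operator `w(p,q) = ⊗_i ξ^{-2⁻¹ p_i q_i} Z^{p_i} X^{q_i}`
(for odd prime `d`).  Its matrix entries are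
`w(p,q)[k+q, k] = ξ^{p·k + 2⁻¹ p·q}`. -/
noncomputable def weyl (d n : ℕ) [Fact (Nat.Prime d)] (p q : QV d n) : Mat d n :=
  Matrix.of fun k' k =>
    if k' = k + q then ch d (qdot p k + (2 : ZMod d)⁻¹ * qdot p q) else 0

/-- `ρ` is an `n`-qudit state: positive semidefinite with trace one. -/
def IsState (d n : ℕ) [Fact (Nat.Prime d)] (ρ : Mat d n) : Prop :=
  ρ.PosSemidef ∧ ρ.trace = 1

/-- The characteristic function `Ξ_ρ(p,q) = Tr[ρ w(-p,-q)]`. -/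
noncomputable def xi (d n : ℕ) [Fact (Nat.Prime d)] (ρ : Mat d n)
    (pq : QV d n × QV d n) : ℂ :=
  (ρ * weyl d n (-pq.1) (-pq.2)).trace

/-- The mean state `M(ρ) = d^{-n} ∑_{|Ξ_ρ(p,q)| = 1} Ξ_ρ(p,q) w(p,q)`. -/
noncomputable def meanState (d n : ℕ) [Fact (Nat.Prime d)] (ρ : Mat d n) : Mat d n :=
  ((d : ℂ) ^ n)⁻¹ •
    ∑ pq : QV d n × QV d n,
      if ‖xi d n ρ pq‖ = 1 then xi d n ρ pq • weyl d n pq.1 pq.2 else 0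

/-- `ρ` is a minimal stabilizer-projection state (MSPS): for some `r ≤ n` there are
mutually commuting Weyl operators `w(p_i,q_i)`, `i = 1,…,r`, whose labels generate a
subgroup of `V^n` of order `d^r`, and phases `x ∈ ℤ_d^r`, such that
`ρ = d^{-(n-r)} ∏_i ( (1/d) ∑_{k ∈ ℤ_d} (ξ^{x_i} w(p_i,q_i))^k )`. -/
noncomputable def IsMSPS (d n : ℕ) [Fact (Nat.Prime d)] (ρ : Mat d n) : Prop :=
  ∃ r : ℕ, r ≤ n ∧
    ∃ (p q : Fin r → QV d n) (x : Fin r → ZMod d),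
      (∀ i j, Commute (weyl d n (p i) (q i)) (weyl d n (p j) (q j))) ∧
      Nat.card (AddSubgroup.closure (Set.range fun i => (p i, q i)) :
        AddSubgroup (QV d n × QV d n)) = d ^ r ∧
      ρ = ((d : ℂ) ^ (n - r))⁻¹ •
        (List.ofFn fun i =>
          (d : ℂ)⁻¹ • ∑ k : ZMod d, (ch d (x i) • weyl d n (p i) (q i)) ^ k.val).prod

/-- The magic gap `MG(ρ) = 1 - max{|Ξ_ρ(p,q)| : Ξ_ρ(p,q) ≠ 0, |Ξ_ρ(p,q)| ≠ 1}`,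
and `MG(ρ) = 0` if this set is empty. -/
noncomputable def magicGap (d n : ℕ) [Fact (Nat.Prime d)] (ρ : Mat d n) : ℝ :=
  let s : Finset ℝ :=
    (Finset.univ.filter fun pq : QV d n × QV d n =>
      xi d n ρ pq ≠ 0 ∧ ‖xi d n ρ pq‖ ≠ 1).image
      fun pq => ‖xi d n ρ pq‖
  if h : s.Nonempty then 1 - s.max' h else 0

/-- Von Neumann entropy `H(ρ) = -∑ λ_i log λ_i` (natural log, eigenvalues of `ρ`),
with the convention `0 log 0 = 0`; junk value `0` on non-Hermitian matrices. -/
noncomputable def vnEnt {d n : ℕ} [Fact (Nat.Prime d)] (ρ : Mat d n) : ℝ :=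
  if h : ρ.IsHermitian then -∑ i, h.eigenvalues i * Real.log (h.eigenvalues i) else 0

/-- Rényi entropy `H_α` for `α ∈ [0,∞]`:  `H_0 = log rank`, `H_1 = H` (von Neumann),
`H_∞ = -log λ_max`, and `H_α = (1-α)⁻¹ log ∑ λ_i^α` otherwise. -/
noncomputable def renyiEnt {d n : ℕ} [Fact (Nat.Prime d)] (α : ℝ≥0∞) (ρ : Mat d n) : ℝ :=
  if h : ρ.IsHermitian then
    if α = 0 then Real.log (ρ.rank : ℝ)
    else if α = 1 then -∑ i, h.eigenvalues i * Real.log (h.eigenvalues i)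
    else if α = ⊤ then -Real.log (⨆ i, h.eigenvalues i)
    else (1 - α.toReal)⁻¹ * Real.log (∑ i, h.eigenvalues i ^ α.toReal)
  else 0

/-- Matrix logarithm on the support: `log ρ = U diag(log λ_i) U†` via the spectral
decomposition, with `log 0 = 0` on the kernel; junk value `0` off Hermitian matrices. -/
noncomputable def matLog {d n : ℕ} [Fact (Nat.Prime d)] (ρ : Mat d n) : Mat d n :=
  if h : ρ.IsHermitian then
    (h.eigenvectorUnitary : Mat d n) *
      Matrix.diagonal (fun i => (Real.log (h.eigenvalues i) : ℂ)) *
      star (h.eigenvectorUnitary : Mat d n)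
  else 0

/-- Matrix real power on the support: `ρ^t = U diag(λ_i^t) U†`, with `0^t = 0` on the
kernel (for `t ≠ 0`); junk value `0` off Hermitian matrices. -/
noncomputable def matRpow {d n : ℕ} [Fact (Nat.Prime d)] (ρ : Mat d n) (t : ℝ) : Mat d n :=
  if h : ρ.IsHermitian then
    (h.eigenvectorUnitary : Mat d n) *
      Matrix.diagonal (fun i => ((h.eigenvalues i ^ t : ℝ) : ℂ)) *
      star (h.eigenvectorUnitary : Mat d n)
  else 0

/-- Support inclusion `supp ρ ⊆ supp σ`, expressed as `ker σ ⊆ ker ρ`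
(the correct notion for positive semidefinite matrices). -/
def suppLE {d n : ℕ} [Fact (Nat.Prime d)] (ρ σ : Mat d n) : Prop :=
  ∀ v : QV d n → ℂ, σ.mulVec v = 0 → ρ.mulVec v = 0

/-- Relative entropy `D(ρ‖σ) = Tr[ρ(log ρ - log σ)]` when `supp ρ ⊆ supp σ`, else `+∞`. -/
noncomputable def relEnt {d n : ℕ} [Fact (Nat.Prime d)] (ρ σ : Mat d n) : EReal :=
  if suppLE ρ σ then (((ρ * (matLog ρ - matLog σ)).trace.re : ℝ) : EReal) else ⊤

/-- Sandwiched Rényi relative entropy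
`D_α(ρ‖σ) = (α-1)⁻¹ log Tr[(σ^{(1-α)/(2α)} ρ σ^{(1-α)/(2α)})^α]` for `α ≠ 1`
(with `+∞` when `supp ρ ⊄ supp σ`), and `D_1 = D` the relative entropy. -/
noncomputable def sandRenyi {d n : ℕ} [Fact (Nat.Prime d)] (α : ℝ) (ρ σ : Mat d n) :
    EReal :=
  if α = 1 then relEnt ρ σ
  else if suppLE ρ σ then
    let x : ℝ := (α - 1)⁻¹ * Real.log
      ((matRpow (matRpow σ ((1 - α) / (2 * α)) * ρ * matRpow σ ((1 - α) / (2 * α)))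
        α).trace.re)
    (x : EReal)
  else ⊤

/-- The key unitary `U|i,j⟩ = |N g₁₁ i - N g₁₀ j, -N g₀₁ i + N g₀₀ j⟩`,
where `N = (det G)⁻¹` in `ℤ_d`. -/
noncomputable def convU (d n : ℕ) [Fact (Nat.Prime d)] (g00 g01 g10 g11 : ZMod d) :
    Matrix (QV d n × QV d n) (QV d n × QV d n) ℂ :=
  Matrix.of fun kl ij =>
    if kl = ((fun a => (g00 * g11 - g01 * g10)⁻¹ * g11 * ij.1 a
                      - (g00 * g11 - g01 * g10)⁻¹ * g10 * ij.2 a : QV d n),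
             (fun a => -((g00 * g11 - g01 * g10)⁻¹ * g01) * ij.1 a
                      + (g00 * g11 - g01 * g10)⁻¹ * g00 * ij.2 a : QV d n))
    then 1 else 0

/-- Tensor (Kronecker) product of two `n`-qudit operators, on the doubled system. -/
def kron {d n : ℕ} (ρ σ : Mat d n) : Matrix (QV d n × QV d n) (QV d n × QV d n) ℂ :=
  Matrix.of fun ij kl => ρ ij.1 kl.1 * σ ij.2 kl.2

/-- Partial trace over the second `n`-qudit factor. -/
noncomputable def ptrB {d n : ℕ} [Fact (Nat.Prime d)]
    (M : Matrix (QV d n × QV d n) (QV d n × QV d n) ℂ) : Mat d n :=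
  Matrix.of fun i i' => ∑ j : QV d n, M (i, j) (i', j)

/-- The convolution `ρ ⊠ σ = Tr_B[U (ρ ⊗ σ) U†]` with parameter matrix
`G = [g₀₀, g₀₁; g₁₀, g₁₁]`. -/
noncomputable def conv (d n : ℕ) [Fact (Nat.Prime d)] (g00 g01 g10 g11 : ZMod d)
    (ρ σ : Mat d n) : Mat d n :=
  ptrB (convU d n g00 g01 g10 g11 * kron ρ σ * (convU d n g00 g01 g10 g11)ᴴ)

/-- The beam-splitter unitary `U_{s,t}|i,j⟩ = |s i + t j, t i - s j⟩`. -/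
noncomputable def bsU (d n : ℕ) [Fact (Nat.Prime d)] (s t : ZMod d) :
    Matrix (QV d n × QV d n) (QV d n × QV d n) ℂ :=
  Matrix.of fun kl ij =>
    if kl = ((fun a => s * ij.1 a + t * ij.2 a : QV d n),
             (fun a => t * ij.1 a - s * ij.2 a : QV d n))
    then 1 else 0

/-- The beam-splitter convolution `ρ ⊠_{s,t} σ = Tr_B[U_{s,t} (ρ ⊗ σ) U_{s,t}†]`. -/
noncomputable def bsConv (d n : ℕ) [Fact (Nat.Prime d)] (s t : ZMod d)
    (ρ σ : Mat d n) : Mat d n :=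
  ptrB (bsU d n s t * kron ρ σ * (bsU d n s t)ᴴ)

/-- Iterated self-convolution: `⊠^0 ρ = ρ` and `⊠^{N+1} ρ = (⊠^N ρ) ⊠ ρ`. -/
noncomputable def bsIter (d n : ℕ) [Fact (Nat.Prime d)] (s t : ZMod d) :
    ℕ → Mat d n → Mat d n
  | 0, ρ => ρ
  | N + 1, ρ => bsConv d n s t (bsIter d n s t N ρ) ρ

/-- `ρ` is the pure stabilizer state `|ψ⟩⟨ψ|` with stabilizer label group `S ⊆ V^n`:
`S` has order `d^n` and `ψ` is a common eigenvector of all `w(p,q)`, `(p,q) ∈ S`. -/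
noncomputable def IsPureStabilizerWithGroup (d n : ℕ) [Fact (Nat.Prime d)]
    (ρ : Mat d n) (S : AddSubgroup (QV d n × QV d n)) : Prop :=
  Nat.card S = d ^ n ∧
    ∃ ψ : QV d n → ℂ, ψ ≠ 0 ∧
      ρ = Matrix.of (fun a b => ψ a * starRingEnd ℂ (ψ b)) ∧
      ∀ pq ∈ S, ∃ c : ℂ, (weyl d n pq.1 pq.2).mulVec ψ = c • ψ

/-- `ρ` is a pure stabilizer state. -/
noncomputable def IsPureStabilizer (d n : ℕ) [Fact (Nat.Prime d)] (ρ : Mat d n) : Prop :=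
  ∃ S : AddSubgroup (QV d n × QV d n), IsPureStabilizerWithGroup d n ρ S

/-- `ρ` is a stabilizer state: a convex combination of pure stabilizer states. -/
noncomputable def IsStabilizerState (d n : ℕ) [Fact (Nat.Prime d)] (ρ : Mat d n) : Prop :=
  ∃ (m : ℕ) (p : Fin m → ℝ) (τ : Fin m → Mat d n),
    (∀ i, 0 ≤ p i) ∧ ∑ i, p i = 1 ∧ (∀ i, IsPureStabilizer d n (τ i)) ∧
    ρ = ∑ i, (p i : ℂ) • τ i

/-- `U` is a Clifford unitary: a unitary mapping each Weyl operator, under conjugation,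
to a complex phase times a Weyl operator. -/
noncomputable def IsClifford (d n : ℕ) [Fact (Nat.Prime d)] (U : Mat d n) : Prop :=
  U ∈ Matrix.unitaryGroup (QV d n) ℂ ∧
    ∀ pq : QV d n × QV d n, ∃ (c : ℂ) (pq' : QV d n × QV d n),
      ‖c‖ = 1 ∧ U * weyl d n pq.1 pq.2 * Uᴴ = c • weyl d n pq'.1 pq'.2

/-- The divergence-based quantum Fisher information `J(ρ; H) = Tr[ρ [H,[H, log ρ]]]`. -/
noncomputable def fisherJ {d n : ℕ} [Fact (Nat.Prime d)] (ρ H : Mat d n) : ℝ :=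
  (ρ * (H * (H * matLog ρ - matLog ρ * H) - (H * matLog ρ - matLog ρ * H) * H)).trace.re

/-- Embed a single-qudit operator at site `k` of an `n`-qudit system
(tensored with the identity elsewhere). -/
noncomputable def embedAt (d n : ℕ) (k : Fin n) (M : Matrix (ZMod d) (ZMod d) ℂ) :
    Mat d n :=
  Matrix.of fun v w => if ∀ i, i ≠ k → v i = w i then M (v k) (w k) else 0

/-- The rank-one projection `H_j^Z = |j⟩⟨j|` onto the eigenvector of `Z`
with eigenvalue `ξ^j`. -/
noncomputable def projZ (d : ℕ) (j : ZMod d) : Matrix (ZMod d) (ZMod d) ℂ :=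
  Matrix.of fun a b => if a = j ∧ b = j then 1 else 0

/-- The rank-one projection `H_j^X` onto the eigenvector of `X` with eigenvalue `ξ^j`;
its entries are `(H_j^X)_{a b} = d⁻¹ ξ^{j(b-a)}`. -/
noncomputable def projX (d : ℕ) (j : ZMod d) : Matrix (ZMod d) (ZMod d) ℂ :=
  Matrix.of fun a b => (d : ℂ)⁻¹ * ch d (j * (b - a))

/-- Total Fisher information
`J(ρ) = ∑_{k=1}^n ∑_{j ∈ ℤ_d} J(ρ; H_j^{X_k}) + J(ρ; H_j^{Z_k})`. -/
noncomputable def fisherTotal (d n : ℕ) [Fact (Nat.Prime d)] (ρ : Mat d n) : ℝ :=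
  ∑ k : Fin n, ∑ j : ZMod d,
    (fisherJ ρ (embedAt d n k (projX d j)) + fisherJ ρ (embedAt d n k (projZ d j)))

/-- Holevo capacity of a channel `E`:
`χ(E) = sup H(∑ p_i E(ρ_i)) - ∑ p_i H(E(ρ_i))` over finite ensembles of states. -/
noncomputable def holevoCap (d n : ℕ) [Fact (Nat.Prime d)] (E : Mat d n → Mat d n) : ℝ :=
  ⨆ m : ℕ, ⨆ p : Fin m → ℝ, ⨆ ρs : Fin m → Mat d n,
    ⨆ _ : (∀ i, 0 ≤ p i) ∧ ∑ i, p i = 1 ∧ ∀ i, IsState d n (ρs i),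
      (vnEnt (∑ i, (p i : ℂ) • E (ρs i)) - ∑ i, p i * vnEnt (E (ρs i)))

/-- Hilbert–Schmidt norm `‖A‖₂ = (Tr[A†A])^{1/2}`. -/
noncomputable def hsNorm {d n : ℕ} [Fact (Nat.Prime d)] (A : Mat d n) : ℝ :=
  Real.sqrt ((Aᴴ * A).trace.re)

/-- Trace norm `‖A‖₁ = Tr[(A†A)^{1/2}]`. -/
noncomputable def trNorm {d n : ℕ} [Fact (Nat.Prime d)] (A : Mat d n) : ℝ :=
  (matRpow (Aᴴ * A) (2⁻¹ : ℝ)).trace.re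

/-- Tensor product of an `n₁`-qudit operator with an `n₂`-qudit operator,
as an `(n₁+n₂)`-qudit operator. -/
def tensorMat (d n₁ n₂ : ℕ) (ρ₁ : Mat d n₁) (ρ₂ : Mat d n₂) : Mat d (n₁ + n₂) :=
  Matrix.of fun v w =>
    ρ₁ (fun i => v (Fin.castAdd n₂ i)) (fun i => w (Fin.castAdd n₂ i)) *
    ρ₂ (fun j => v (Fin.natAdd n₁ j)) (fun j => w (Fin.natAdd n₁ j))

/-! ### Qubit (`d = 2`) specific definitions -/

/-- The `n`-qubit Weyl (Pauli) operator `w(p,q) = ⊗_i i^{-p_i q_i} Z^{p_i} X^{q_i}`. -/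
noncomputable def weyl2 (n : ℕ) (p q : Fin n → ZMod 2) :
    Matrix (Fin n → ZMod 2) (Fin n → ZMod 2) ℂ :=
  Matrix.of fun k' k =>
    if k' = k + q then
      ∏ i, ((-Complex.I) ^ ((p i).val * (q i).val) *
        (-1 : ℂ) ^ ((p i * (k i + q i)).val))
    else 0

/-- The `n`-qubit characteristic function `Ξ_ρ(p,q) = Tr[ρ w(p,q)†]`. -/
noncomputable def xi2 (n : ℕ) (ρ : Matrix (Fin n → ZMod 2) (Fin n → ZMod 2) ℂ)
    (pq : (Fin n → ZMod 2) × (Fin n → ZMod 2)) : ℂ :=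
  (ρ * (weyl2 n pq.1 pq.2)ᴴ).trace

/-- The logarithmic magic gap
`LMG(ρ) = -log₂ max{|Ξ_ρ(p,q)| : Ξ_ρ(p,q) ≠ 0, |Ξ_ρ(p,q)| ≠ 1}` (`0` if the set is
empty). -/
noncomputable def lmg (n : ℕ) (ρ : Matrix (Fin n → ZMod 2) (Fin n → ZMod 2) ℂ) : ℝ :=
  let s : Finset ℝ :=
    (Finset.univ.filter fun pq : (Fin n → ZMod 2) × (Fin n → ZMod 2) =>
      xi2 n ρ pq ≠ 0 ∧ ‖xi2 n ρ pq‖ ≠ 1).image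
      fun pq => ‖xi2 n ρ pq‖
  if h : s.Nonempty then -Real.logb 2 (s.max' h) else 0

/-- `U` is an `n`-qubit Clifford unitary. -/
noncomputable def IsClifford2 (n : ℕ) (U : Matrix (Fin n → ZMod 2) (Fin n → ZMod 2) ℂ) :
    Prop :=
  U ∈ Matrix.unitaryGroup (Fin n → ZMod 2) ℂ ∧
    ∀ pq : (Fin n → ZMod 2) × (Fin n → ZMod 2),
      ∃ (c : ℂ) (pq' : (Fin n → ZMod 2) × (Fin n → ZMod 2)),
        ‖c‖ = 1 ∧ U * weyl2 n pq.1 pq.2 * Uᴴ = c • weyl2 n pq'.1 pq'.2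

/-- The T gate `diag(1, e^{iπ/4})` acting on qubit `k` of an `n`-qubit system. -/
noncomputable def tGateAt (n : ℕ) (k : Fin n) :
    Matrix (Fin n → ZMod 2) (Fin n → ZMod 2) ℂ :=
  embedAt 2 n k (Matrix.of fun a b =>
    if a = b then (if a = 0 then 1 else Complex.exp (Real.pi * Complex.I / 4)) else 0)

/-- An `n`-qubit state: positive semidefinite with trace one. -/
def IsState2 (n : ℕ) (ρ : Matrix (Fin n → ZMod 2) (Fin n → ZMod 2) ℂ) : Prop :=
  ρ.PosSemidef ∧ ρ.trace = 1

end PaperQI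

/-!
The characteristic function `Ξ` turns the convolution into a product: `Ξ_{ρ ⊠ σ}(x)` equals
`Ξ_ρ(φ x) Ξ_σ(ψ x)` for two bijective scalings `φ`, `ψ` of phase space, and by Parseval the purity
of `ρ` is `d⁻ⁿ ∑ |Ξ_ρ|²`.

A Holevo capacity of `n log d` leaves no room for output entropy, so by compactness of the state
space some output `ρ ⊠ σ` is pure. Then `∑ |Ξ_ρ(φ x)|² |Ξ_σ(ψ x)|² = dⁿ`, while each factor alone
lies in `[0, 1]` and sums to at most `dⁿ`. This forces `|Ξ_σ| ∈ {0, 1}` and `σ` to be pure, so that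
the points where `|Ξ_σ| = 1`, which always form a group for a pure state, are `dⁿ` in number.

Conversely, let `S` be the stabilizer group of `σ`. The stabilizer states of the rescaled group
`φ (ψ⁻¹ S)` have pure outputs, because both factors of `Ξ_{ρ ⊠ σ}` have modulus one on `ψ⁻¹ S`.
Averaged over all characters of that group they give the maximally mixed state, whose output is
again maximally mixed.
-/

namespace PaperQI

section ProbabilityVector

variable {ι : Type*} [Fintype ι] {p : ι → ℝ}

theorem sum_negMulLog_le_log_card (hp : p ∈ stdSimplex ℝ ι) :
    ∑ i, Real.negMulLog (p i) ≤ Real.log (Fintype.card ι) := by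
  have : Nonempty ι := by
    by_contra h
    have := not_nonempty_iff.1 h
    simpa using hp.2
  have hN : (0 : ℝ) < Fintype.card ι := by exact_mod_cast Fintype.card_pos
  have jensen := Real.concaveOn_negMulLog.le_map_sum (t := Finset.univ) (p := p)
    (w := fun _ => (Fintype.card ι : ℝ)⁻¹) (fun _ _ => by positivity)
    (by simp [hN.ne']) (fun i _ => hp.1 i)
  simp only [smul_eq_mul, ← Finset.mul_sum, hp.2, mul_one] at jensen
  have huniform : Real.negMulLog (Fintype.card ι : ℝ)⁻¹ =
      (Fintype.card ι : ℝ)⁻¹ * Real.log (Fintype.card ι) := by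
    rw [Real.negMulLog, Real.log_inv, neg_mul_neg]
  rwa [huniform, mul_le_mul_iff_right₀ (inv_pos.2 hN)] at jensen

theorem one_sub_sum_sq_le_sum_negMulLog (hp : p ∈ stdSimplex ℝ ι) :
    1 - ∑ i, p i ^ 2 ≤ ∑ i, Real.negMulLog (p i) := by
  rw [← hp.2, ← Finset.sum_sub_distrib]
  refine Finset.sum_le_sum fun i _ => ?_
  rcases (hp.1 i).eq_or_lt with h | h
  · simp [← h]
  · rw [Real.negMulLog]
    nlinarith [Real.log_le_sub_one_of_pos h]

theorem sum_sq_le_one (hp : p ∈ stdSimplex ℝ ι) : ∑ i, p i ^ 2 ≤ 1 := by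
  rw [← hp.2]
  refine Finset.sum_le_sum fun i _ => ?_
  have := mem_Icc_of_mem_stdSimplex hp i
  exact pow_le_of_le_one this.1 this.2 two_ne_zero

theorem exists_eq_single_of_sum_sq_eq_one [DecidableEq ι] (hp : p ∈ stdSimplex ℝ ι)
    (h : ∑ i, p i ^ 2 = 1) : ∃ i, p = Pi.single i 1 := by
  have hIcc := mem_Icc_of_mem_stdSimplex hp
  have hsq : ∀ i, p i ^ 2 = p i := by
    have := (Finset.sum_eq_sum_iff_of_le fun i _ =>
      pow_le_of_le_one (hIcc i).1 (hIcc i).2 two_ne_zero).1 (h.trans hp.2.symm)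
    exact fun i => this i (Finset.mem_univ i)
  obtain ⟨i, hi⟩ : ∃ i, p i ≠ 0 := by
    by_contra! hzero
    simpa [hzero] using hp.2
  have hi1 : p i = 1 := mul_left_cancel₀ hi (by rw [← sq, hsq, mul_one])
  have hrest : ∑ j ∈ Finset.univ.erase i, p j = 0 := by
    have := Finset.add_sum_erase Finset.univ p (Finset.mem_univ i)
    linarith [hp.2]
  refine ⟨i, funext fun j => ?_⟩
  rcases eq_or_ne j i with rfl | hj
  · rw [hi1, Pi.single_eq_same]
  · rw [Pi.single_eq_of_ne hj]
    exact (Finset.sum_eq_zero_iff_of_nonneg fun k _ => hp.1 k).1 hrest j (by simp [hj])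

theorem eq_zero_or_one_of_sum_le_sum_mul {A B : ι → ℝ} (hA : ∀ x, A x ∈ Set.Icc 0 1)
    (hB : ∀ x, B x ∈ Set.Icc 0 1) (hAB : ∑ x, A x ≤ ∑ x, A x * B x)
    (hBA : ∑ x, B x ≤ ∑ x, A x * B x) (x : ι) : B x = 0 ∨ B x = 1 := by
  have hleA : ∀ x ∈ Finset.univ, A x * B x ≤ A x := fun x _ =>
    mul_le_of_le_one_right (hA x).1 (hB x).2
  have hleB : ∀ x ∈ Finset.univ, A x * B x ≤ B x := fun x _ =>
    mul_le_of_le_one_left (hB x).1 (hA x).2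
  have hA' := (Finset.sum_eq_sum_iff_of_le hleA).1
    ((Finset.sum_le_sum hleA).antisymm hAB) x (Finset.mem_univ x)
  have hB' := (Finset.sum_eq_sum_iff_of_le hleB).1
    ((Finset.sum_le_sum hleB).antisymm hBA) x (Finset.mem_univ x)
  have hidem : B x * (B x - 1) = 0 := by
    rw [hA'.symm.trans hB'] at hB'
    linarith
  exact (mul_eq_zero.1 hidem).imp_right sub_eq_zero.1

end ProbabilityVector

section Spectral

variable {ι 𝕜 : Type*} [Fintype ι] [RCLike 𝕜] {ρ : Matrix ι ι 𝕜}

/-- The purity `Tr[ρ ρ†]` of a matrix, i.e. the square of its Hilbert–Schmidt norm, as a real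
number. -/
def purity (ρ : Matrix ι ι 𝕜) : ℝ := ∑ a, ∑ b, ‖ρ a b‖ ^ 2

theorem norm_sq_entry_le_purity (ρ : Matrix ι ι 𝕜) (a b : ι) : ‖ρ a b‖ ^ 2 ≤ purity ρ :=
  (Finset.single_le_sum (f := fun b => ‖ρ a b‖ ^ 2) (fun _ _ => by positivity)
    (Finset.mem_univ b)).trans
  (Finset.single_le_sum (f := fun a => ∑ b, ‖ρ a b‖ ^ 2) (fun _ _ => by positivity)
    (Finset.mem_univ a))

theorem ofReal_purity (ρ : Matrix ι ι 𝕜) : (purity ρ : 𝕜) = (ρ * ρᴴ).trace := by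
  simp only [purity, Matrix.trace, Matrix.diag_apply, Matrix.mul_apply, conjTranspose_apply,
    RCLike.star_def, RCLike.mul_conj]
  push_cast
  rfl

theorem purity_eq_sum_eigenvalues_sq [DecidableEq ι] (hρ : ρ.IsHermitian) :
    purity ρ = ∑ i, hρ.eigenvalues i ^ 2 := by
  have h : (ρ * ρ).trace = ∑ i, ((hρ.eigenvalues i ^ 2 : ℝ) : 𝕜) := by
    conv_lhs => rw [hρ.spectral_theorem]
    rw [← map_mul, Unitary.conjStarAlgAut_apply, Matrix.trace_mul_cycle,
      Unitary.coe_star_mul_self, one_mul, Matrix.diagonal_mul_diagonal, Matrix.trace_diagonal]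
    simp [sq]
  have key := ofReal_purity ρ
  rw [hρ.eq, h] at key
  exact_mod_cast key

theorem eigenvalues_mem_stdSimplex [DecidableEq ι] (hρ : ρ.PosSemidef) (htr : ρ.trace = 1) :
    hρ.isHermitian.eigenvalues ∈ stdSimplex ℝ ι := by
  refine ⟨hρ.eigenvalues_nonneg, ?_⟩
  have := hρ.isHermitian.trace_eq_sum_eigenvalues
  rw [htr] at this
  exact_mod_cast this.symm

theorem purity_le_one (hρ : ρ.PosSemidef) (htr : ρ.trace = 1) : purity ρ ≤ 1 := by
  rw [purity_eq_sum_eigenvalues_sq hρ.isHermitian]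
  exact sum_sq_le_one (eigenvalues_mem_stdSimplex hρ htr)

theorem exists_eq_vecMulVec_of_purity_eq_one (hρ : ρ.PosSemidef) (htr : ρ.trace = 1)
    (hpure : purity ρ = 1) : ∃ ψ : ι → 𝕜, ρ = vecMulVec ψ (star ψ) := by
  rw [purity_eq_sum_eigenvalues_sq hρ.isHermitian] at hpure
  obtain ⟨i, hi⟩ :=
    exists_eq_single_of_sum_sq_eq_one (eigenvalues_mem_stdSimplex hρ htr) hpure
  refine ⟨fun a => (hρ.isHermitian.eigenvectorUnitary : Matrix ι ι 𝕜) a i, ?_⟩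
  conv_lhs => rw [hρ.isHermitian.spectral_theorem, hi, Unitary.conjStarAlgAut_apply]
  ext a b
  rw [Matrix.mul_apply, Finset.sum_eq_single i]
  · simp [vecMulVec_apply]
  · intro j _ hj
    simp [Pi.single_eq_of_ne hj]
  · simp

theorem norm_trace_mul_unitary_le [DecidableEq ι] (hρ : ρ.PosSemidef) {U : Matrix ι ι 𝕜}
    (hU : U ∈ unitaryGroup ι 𝕜) : ‖(ρ * U).trace‖ ≤ RCLike.re ρ.trace := by
  set V := hρ.isHermitian.eigenvectorUnitary
  have hW : star (V : Matrix ι ι 𝕜) * U * V ∈ unitaryGroup ι 𝕜 :=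
    mul_mem (mul_mem (Unitary.star_mem V.2) hU) V.2
  have htrace : (ρ * U).trace = ∑ i, (hρ.isHermitian.eigenvalues i : 𝕜) *
      (star (V : Matrix ι ι 𝕜) * U * V) i i := by
    conv_lhs => rw [hρ.isHermitian.spectral_theorem, Unitary.conjStarAlgAut_apply]
    rw [Matrix.mul_assoc, Matrix.trace_mul_comm, ← Matrix.mul_assoc, Matrix.trace_mul_comm]
    simp [Matrix.trace, Matrix.diagonal_mul, V]
  rw [htrace, hρ.isHermitian.trace_eq_sum_eigenvalues, map_sum]
  refine (norm_sum_le _ _).trans (Finset.sum_le_sum fun i _ => ?_)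
  have hi := hρ.eigenvalues_nonneg i
  rw [norm_mul, RCLike.ofReal_re, RCLike.norm_ofReal, abs_of_nonneg hi]
  exact mul_le_of_le_one_right hi (entry_norm_bound_of_unitary hW i i)

theorem exists_eq_smul_iff_norm_dotProduct_eq_one {ψ φ : ι → 𝕜} (hψ : star ψ ⬝ᵥ ψ = 1)
    (hφ : star φ ⬝ᵥ φ = 1) : (∃ c : 𝕜, φ = c • ψ) ↔ ‖star ψ ⬝ᵥ φ‖ = 1 := by
  have hsq (z : 𝕜) : star z * z = ((‖z‖ ^ 2 : ℝ) : 𝕜) := by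
    rw [RCLike.star_def, RCLike.conj_mul, RCLike.ofReal_pow]
  constructor
  · rintro ⟨c, rfl⟩
    simp only [star_smul, smul_dotProduct, dotProduct_smul, hψ, smul_eq_mul, mul_one] at hφ ⊢
    rw [mul_comm, hsq] at hφ
    exact (pow_eq_one_iff_of_nonneg (norm_nonneg c) two_ne_zero).1 (by exact_mod_cast hφ)
  · intro h
    have hc : star (star ψ ⬝ᵥ φ) * (star ψ ⬝ᵥ φ) = 1 := by rw [hsq, h]; simp
    refine ⟨star ψ ⬝ᵥ φ, ?_⟩
    rw [← sub_eq_zero, ← dotProduct_star_self_eq_zero (v := φ - _)]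
    simp only [star_sub, star_smul, sub_dotProduct, dotProduct_sub, smul_dotProduct,
      dotProduct_smul, hψ, hφ, smul_eq_mul, star_dotProduct φ ψ]
    linear_combination -hc

end Spectral

section Character

variable {d : ℕ} [NeZero d]

theorem ch_eq_stdAddChar (z : ZMod d) : ch d z = ZMod.stdAddChar z := by
  rw [ZMod.stdAddChar_apply, ZMod.toCircle_apply]
  rfl

theorem ch_add (x y : ZMod d) : ch d (x + y) = ch d x * ch d y := by
  simp only [ch_eq_stdAddChar, AddChar.map_add_eq_mul]

theorem ch_zero : ch d (0 : ZMod d) = 1 := by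
  rw [ch_eq_stdAddChar, AddChar.map_zero_eq_one]

theorem norm_ch (z : ZMod d) : ‖ch d z‖ = 1 := by
  rw [ch_eq_stdAddChar, AddChar.norm_apply]

theorem ch_ne_zero (z : ZMod d) : ch d z ≠ 0 :=
  norm_ne_zero_iff.1 (by rw [norm_ch]; exact one_ne_zero)

theorem star_ch (z : ZMod d) : star (ch d z) = ch d (-z) := by
  rw [ch_eq_stdAddChar, ch_eq_stdAddChar, AddChar.map_neg_eq_conj, RCLike.star_def]

theorem ch_eq_one_iff (z : ZMod d) : ch d z = 1 ↔ z = 0 := by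
  rw [← ch_zero (d := d), ch_eq_stdAddChar, ch_eq_stdAddChar, ZMod.injective_stdAddChar.eq_iff]

theorem sum_ch_linearMap {V : Type*} [AddCommGroup V] [Module (ZMod d) V] [Fintype V]
    (f : V →ₗ[ZMod d] ZMod d) :
    ∑ z, ch d (f z) = if f = 0 then (Fintype.card V : ℂ) else 0 := by
  let χ : AddChar V ℂ := ZMod.stdAddChar.compAddMonoidHom f.toAddMonoidHom
  have hχ (z : V) : χ z = ch d (f z) := (ch_eq_stdAddChar _).symm
  have htrivial : χ = 0 ↔ f = 0 := by
    simp only [AddChar.eq_zero_iff, hχ, ch_eq_one_iff, LinearMap.ext_iff, LinearMap.zero_apply]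
  simpa only [hχ, htrivial] using AddChar.sum_eq_ite χ

end Character

section PhaseSpace

variable {d n : ℕ}

/-- The discrete phase space `V^n = ℤ_d^n × ℤ_d^n`, whose points label the Weyl operators. -/
abbrev PhaseSpace (d n : ℕ) := QV d n × QV d n

/-- The symplectic form `⟨(p, q), (p', q')⟩ = p · q' - p' · q` on phase space, which governs the
commutation of Weyl operators. -/
def symp : PhaseSpace d n →ₗ[ZMod d] PhaseSpace d n →ₗ[ZMod d] ZMod d :=
  LinearMap.mk₂ (ZMod d) (fun x y => x.1 ⬝ᵥ y.2 - y.1 ⬝ᵥ x.2)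
    (fun x x' y => by simp only [Prod.fst_add, Prod.snd_add, add_dotProduct, dotProduct_add]; ring)
    (fun c x y => by simp only [Prod.smul_fst, Prod.smul_snd, smul_dotProduct, dotProduct_smul,
      smul_sub])
    (fun x y y' => by simp only [Prod.fst_add, Prod.snd_add, add_dotProduct, dotProduct_add]; ring)
    (fun c x y => by simp only [Prod.smul_fst, Prod.smul_snd, smul_dotProduct, dotProduct_smul,
      smul_sub])

theorem symp_apply (x y : PhaseSpace d n) : symp x y = x.1 ⬝ᵥ y.2 - y.1 ⬝ᵥ x.2 := rfl

theorem symp_self (x : PhaseSpace d n) : symp x x = 0 := sub_self _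

theorem symp_swap (x y : PhaseSpace d n) : symp y x = -symp x y := (neg_sub _ _).symm

theorem eq_zero_of_forall_symp_eq_zero {y : PhaseSpace d n} (h : ∀ x, symp x y = 0) : y = 0 := by
  have hfst : y.1 = 0 := dotProduct_eq_zero _ fun w => by simpa [symp_apply] using h (0, w)
  have hsnd : y.2 = 0 := dotProduct_eq_zero _ fun w => by
    simpa [symp_apply, dotProduct_comm] using h (w, 0)
  exact Prod.ext hfst hsnd

variable [NeZero d]

theorem card_QV : Fintype.card (QV d n) = d ^ n := by
  simp [ZMod.card]

theorem sum_ch_dotProduct (k : QV d n) :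
    ∑ p : QV d n, ch d (p ⬝ᵥ k) = if k = 0 then (d : ℂ) ^ n else 0 := by
  have hzero : (dotProductBilin (ZMod d) (ZMod d)).flip k = 0 ↔ k = 0 := by
    refine ⟨fun h => dotProduct_eq_zero k fun w => ?_, fun h => by rw [h, map_zero]⟩
    rw [dotProduct_comm]
    exact LinearMap.congr_fun h w
  have key : ∑ p, ch d (p ⬝ᵥ k) = _ := sum_ch_linearMap ((dotProductBilin (ZMod d) (ZMod d)).flip k)
  rw [card_QV, Nat.cast_pow] at key
  simpa only [hzero] using key

theorem sum_ch_symp (y : PhaseSpace d n) :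
    ∑ z, ch d (symp z y) = if y = 0 then ((d : ℂ) ^ n) ^ 2 else 0 := by
  have hzero : symp.flip y = 0 ↔ y = 0 :=
    ⟨fun h => eq_zero_of_forall_symp_eq_zero (LinearMap.congr_fun h),
      fun h => by rw [h, map_zero]⟩
  have key : ∑ z, ch d (symp z y) = _ := sum_ch_linearMap (symp.flip y)
  rw [Fintype.card_prod, card_QV, ← sq, Nat.cast_pow, Nat.cast_pow] at key
  simpa only [hzero] using key

end PhaseSpace

section Displacement

variable {d n : ℕ}

theorem two_inv_add_two_inv (hd : Odd d) : (2 : ZMod d)⁻¹ + (2 : ZMod d)⁻¹ = 1 := by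
  rw [← two_mul]
  exact_mod_cast ZMod.coe_mul_inv_eq_one 2 hd.coprime_two_left

variable [Fact (Nat.Prime d)]

/-- The Weyl operator `w(p, q)` labelled by the phase space point `(p, q)`. -/
noncomputable def displacement (x : PhaseSpace d n) : Mat d n := weyl d n x.1 x.2

theorem displacement_apply (x : PhaseSpace d n) (a b : QV d n) :
    displacement x a b =
      if a = b + x.2 then ch d (x.1 ⬝ᵥ b + (2 : ZMod d)⁻¹ * (x.1 ⬝ᵥ x.2)) else 0 := rfl

theorem displacement_zero : displacement (0 : PhaseSpace d n) = 1 := by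
  ext a b
  simp only [displacement_apply, Matrix.one_apply, Prod.fst_zero, Prod.snd_zero,
    zero_dotProduct, add_zero, mul_zero, ch_zero]

theorem displacement_mul (hd : Odd d) (x y : PhaseSpace d n) :
    displacement x * displacement y =
      ch d ((2 : ZMod d)⁻¹ * symp x y) • displacement (x + y) := by
  ext a b
  rw [Matrix.mul_apply, Matrix.smul_apply, Finset.sum_eq_single (b + y.2)]
  · have hshift : a = b + y.2 + x.2 ↔ a = b + (x + y).2 := by
      rw [Prod.snd_add, add_assoc, add_comm y.2]
    simp only [displacement_apply, if_true, hshift]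
    split_ifs
    · rw [← ch_add, smul_eq_mul, ← ch_add]
      congr 1
      simp only [symp_apply, Prod.fst_add, Prod.snd_add, add_dotProduct, dotProduct_add]
      linear_combination (-(x.1 ⬝ᵥ y.2)) * two_inv_add_two_inv hd
    · rw [zero_mul, smul_zero]
  · intro c _ hc
    rw [displacement_apply y, if_neg hc, mul_zero]
  · simp

theorem displacement_conjTranspose (hd : Odd d) (x : PhaseSpace d n) :
    (displacement x)ᴴ = displacement (-x) := by
  ext a b
  have hshift : b = a + x.2 ↔ a = b + (-x).2 := by
    rw [Prod.snd_neg, ← sub_eq_add_neg, eq_sub_iff_add_eq, eq_comm]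
  simp only [conjTranspose_apply, displacement_apply, hshift]
  split_ifs with h
  · rw [star_ch, h]
    congr 1
    simp only [Prod.fst_neg, Prod.snd_neg, neg_dotProduct, dotProduct_neg, dotProduct_add]
    linear_combination (-(x.1 ⬝ᵥ x.2)) * two_inv_add_two_inv hd
  · exact star_zero _

theorem displacement_mem_unitaryGroup (hd : Odd d) (x : PhaseSpace d n) :
    displacement x ∈ unitaryGroup (QV d n) ℂ := by
  rw [mem_unitaryGroup_iff, star_eq_conjTranspose, displacement_conjTranspose hd,
    displacement_mul hd, map_neg, symp_self, neg_zero, mul_zero, ch_zero, one_smul,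
    add_neg_cancel, displacement_zero]

theorem displacement_mul_comm (hd : Odd d) (x y : PhaseSpace d n) :
    displacement x * displacement y =
      ch d (symp x y) • (displacement y * displacement x) := by
  rw [displacement_mul hd, displacement_mul hd, smul_smul, ← ch_add, add_comm y x,
    symp_swap x y]
  congr 2
  linear_combination (symp x y) * two_inv_add_two_inv hd

theorem trace_displacement (x : PhaseSpace d n) :
    (displacement x).trace = if x = 0 then (d : ℂ) ^ n else 0 := by
  obtain ⟨p, q⟩ := x
  simp only [Matrix.trace, Matrix.diag_apply, displacement_apply, left_eq_add]
  rcases eq_or_ne q 0 with rfl | hq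
  · simp only [if_true, dotProduct_zero, mul_zero, add_zero]
    simp only [dotProduct_comm p, sum_ch_dotProduct, Prod.mk_eq_zero, and_true]
  · simp [hq]

end Displacement

section CharacteristicFunction

variable {d n : ℕ} [Fact (Nat.Prime d)]

theorem xi_eq_trace (ρ : Mat d n) (x : PhaseSpace d n) :
    xi d n ρ x = (ρ * displacement (-x)).trace := rfl

theorem xi_zero (ρ : Mat d n) : xi d n ρ 0 = ρ.trace := by
  rw [xi_eq_trace, neg_zero, displacement_zero, mul_one]

theorem xi_apply (ρ : Mat d n) (x : PhaseSpace d n) :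
    xi d n ρ x =
      ∑ k, ρ k (k - x.2) * ch d (-(x.1 ⬝ᵥ k) + (2 : ZMod d)⁻¹ * (x.1 ⬝ᵥ x.2)) := by
  simp only [xi_eq_trace, Matrix.trace, Matrix.diag_apply, Matrix.mul_apply, displacement_apply,
    Prod.fst_neg, Prod.snd_neg, neg_dotProduct, dotProduct_neg, neg_neg, ← sub_eq_add_neg]
  refine Finset.sum_congr rfl fun k _ => ?_
  rw [Finset.sum_eq_single (k - x.2) (fun b _ hb => by rw [if_neg hb, mul_zero]) (by simp),
    if_pos rfl]

theorem xi_displacement (hd : Odd d) (x y : PhaseSpace d n) :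
    xi d n (displacement y) x = if x = y then (d : ℂ) ^ n else 0 := by
  rw [xi_eq_trace, displacement_mul hd, trace_smul, trace_displacement, ← sub_eq_add_neg,
    map_neg]
  simp only [sub_eq_zero, eq_comm (a := y)]
  split_ifs with h
  · rw [h, symp_self, neg_zero, mul_zero, ch_zero, one_smul]
  · exact smul_zero _

theorem norm_xi_le_one (hd : Odd d) {ρ : Mat d n} (hρ : IsState d n ρ) (x : PhaseSpace d n) :
    ‖xi d n ρ x‖ ≤ 1 := by
  have := norm_trace_mul_unitary_le hρ.1 (displacement_mem_unitaryGroup hd (-x))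
  rwa [hρ.2, RCLike.one_re] at this

theorem xi_vecMulVec (ψ : QV d n → ℂ) (x : PhaseSpace d n) :
    xi d n (vecMulVec ψ (star ψ)) x = star ψ ⬝ᵥ displacement (-x) *ᵥ ψ := by
  rw [xi_eq_trace, vecMulVec_mul, trace_vecMulVec, dotProduct_comm, dotProduct_mulVec]

theorem sum_norm_sum_mul_ch_sq (f : QV d n → ℂ) :
    ∑ p : QV d n, ‖∑ k, f k * ch d (-(p ⬝ᵥ k))‖ ^ 2 = (d : ℝ) ^ n * ∑ k, ‖f k‖ ^ 2 := by
  have expand (p : QV d n) : ((‖∑ k, f k * ch d (-(p ⬝ᵥ k))‖ ^ 2 : ℝ) : ℂ) =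
      ∑ k, ∑ l, f k * star (f l) * ch d (p ⬝ᵥ (l - k)) := by
    rw [Complex.ofReal_pow, ← Complex.mul_conj', ← Complex.star_def, star_sum,
      Finset.sum_mul_sum]
    refine Finset.sum_congr rfl fun k _ => Finset.sum_congr rfl fun l _ => ?_
    rw [star_mul, star_ch, neg_neg, dotProduct_sub, sub_eq_neg_add, ch_add]
    ring
  have orthogonality : ∑ p : QV d n, ((‖∑ k, f k * ch d (-(p ⬝ᵥ k))‖ ^ 2 : ℝ) : ℂ) =
      (d : ℂ) ^ n * ∑ k, ((‖f k‖ ^ 2 : ℝ) : ℂ) := by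
    simp only [expand]
    rw [Finset.sum_comm, Finset.mul_sum]
    refine Finset.sum_congr rfl fun k _ => ?_
    rw [Finset.sum_comm]
    simp only [← Finset.mul_sum, sum_ch_dotProduct, sub_eq_zero]
    rw [Finset.sum_eq_single k (fun l _ hl => by rw [if_neg hl, mul_zero]) (by simp),
      if_pos rfl, Complex.star_def, Complex.mul_conj', mul_comm, Complex.ofReal_pow]
  exact_mod_cast orthogonality

theorem sum_norm_xi_sq (ρ : Mat d n) :
    ∑ x : PhaseSpace d n, ‖xi d n ρ x‖ ^ 2 = (d : ℝ) ^ n * purity ρ := by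
  have diagonal (q : QV d n) : ∑ p : QV d n, ‖xi d n ρ (p, q)‖ ^ 2 =
      (d : ℝ) ^ n * ∑ k, ‖ρ k (k - q)‖ ^ 2 := by
    rw [← sum_norm_sum_mul_ch_sq]
    refine Finset.sum_congr rfl fun p _ => ?_
    simp only [xi_apply, ch_add, ← mul_assoc]
    rw [← Finset.sum_mul, norm_mul, norm_ch, mul_one]
  rw [Fintype.sum_prod_type_right]
  simp only [diagonal]
  rw [← Finset.mul_sum, Finset.sum_comm, purity]
  congr 1
  exact Finset.sum_congr rfl fun k _ => Equiv.sum_comp (Equiv.subLeft k) fun b => ‖ρ k b‖ ^ 2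

end CharacteristicFunction

section Entropy

theorem eigenvalues_ofReal_smul_one {ι 𝕜 : Type*} [Fintype ι] [DecidableEq ι] [RCLike 𝕜] (c : ℝ)
    (h : ((c : 𝕜) • (1 : Matrix ι ι 𝕜)).IsHermitian) (i : ι) : h.eigenvalues i = c := by
  have : Nonempty ι := ⟨i⟩
  have hscalar : (c : 𝕜) • (1 : Matrix ι ι 𝕜) = algebraMap ℝ (Matrix ι ι 𝕜) c := by
    rw [Algebra.algebraMap_eq_smul_one, RCLike.real_smul_eq_coe_smul (K := 𝕜)]
  have hspectrum : spectrum ℝ ((c : 𝕜) • (1 : Matrix ι ι 𝕜)) = {c} := by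
    rw [hscalar, spectrum.scalar_eq]
  exact Set.mem_singleton_iff.1 (hspectrum ▸ h.eigenvalues_mem_spectrum_real i)

variable {d n : ℕ} [Fact (Nat.Prime d)] {ρ : Mat d n}

theorem vnEnt_eq_sum_negMulLog (hρ : ρ.IsHermitian) :
    vnEnt ρ = ∑ i, Real.negMulLog (hρ.eigenvalues i) := by
  simp only [vnEnt, dif_pos hρ, Real.negMulLog, neg_mul, Finset.sum_neg_distrib]

theorem log_card_QV : Real.log (Fintype.card (QV d n)) = n * Real.log d := by
  rw [card_QV, Nat.cast_pow, Real.log_pow]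

theorem vnEnt_le (hρ : IsState d n ρ) : vnEnt ρ ≤ n * Real.log d := by
  rw [vnEnt_eq_sum_negMulLog hρ.1.isHermitian, ← log_card_QV]
  exact sum_negMulLog_le_log_card (eigenvalues_mem_stdSimplex hρ.1 hρ.2)

theorem one_sub_purity_le_vnEnt (hρ : IsState d n ρ) : 1 - purity ρ ≤ vnEnt ρ := by
  rw [vnEnt_eq_sum_negMulLog hρ.1.isHermitian, purity_eq_sum_eigenvalues_sq hρ.1.isHermitian]
  exact one_sub_sum_sq_le_sum_negMulLog (eigenvalues_mem_stdSimplex hρ.1 hρ.2)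

theorem vnEnt_eq_zero_of_purity_eq_one (hρ : IsState d n ρ) (hpure : purity ρ = 1) :
    vnEnt ρ = 0 := by
  rw [purity_eq_sum_eigenvalues_sq hρ.1.isHermitian] at hpure
  obtain ⟨i, hi⟩ :=
    exists_eq_single_of_sum_sq_eq_one (eigenvalues_mem_stdSimplex hρ.1 hρ.2) hpure
  rw [vnEnt_eq_sum_negMulLog hρ.1.isHermitian, hi]
  refine Finset.sum_eq_zero fun j _ => ?_
  rcases eq_or_ne j i with rfl | hj
  · rw [Pi.single_eq_same, Real.negMulLog_one]
  · rw [Pi.single_eq_of_ne hj, Real.negMulLog_zero]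

theorem vnEnt_smul_one {c : ℂ} (hc : IsState d n (c • 1)) :
    vnEnt (c • 1 : Mat d n) = n * Real.log d := by
  have hN : (Fintype.card (QV d n) : ℝ) ≠ 0 := by exact_mod_cast Fintype.card_ne_zero
  obtain rfl : c = ((Fintype.card (QV d n) : ℝ)⁻¹ : ℝ) := by
    have htr := hc.2
    rw [trace_smul, trace_one, smul_eq_mul] at htr
    rw [eq_inv_of_mul_eq_one_left htr, Complex.ofReal_inv, Complex.ofReal_natCast]
  have huniform := eigenvalues_ofReal_smul_one (𝕜 := ℂ) (Fintype.card (QV d n) : ℝ)⁻¹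
    hc.1.isHermitian
  rw [vnEnt_eq_sum_negMulLog hc.1.isHermitian, ← log_card_QV (n := n),
    Finset.sum_congr rfl fun i _ => congrArg Real.negMulLog (huniform i), Finset.sum_const,
    Finset.card_univ, nsmul_eq_mul, Real.negMulLog, Real.log_inv, neg_mul_neg,
    mul_inv_cancel_left₀ hN]

end Entropy

section Stabilizer

variable {d n : ℕ} [Fact (Nat.Prime d)] {ψ : QV d n → ℂ} {x y : PhaseSpace d n}

theorem displacement_neg_mul_self (hd : Odd d) (x : PhaseSpace d n) :
    displacement (-x) * displacement x = 1 := by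
  rw [← displacement_conjTranspose hd, ← star_eq_conjTranspose]
  exact Unitary.star_mul_self_of_mem (displacement_mem_unitaryGroup hd x)

theorem displacement_neg_mulVec_of_eq_smul (hd : Odd d) {c : ℂ}
    (h : displacement x *ᵥ ψ = c • ψ) : displacement (-x) *ᵥ ψ = c⁻¹ • ψ := by
  have hψ : ψ = c • displacement (-x) *ᵥ ψ := by
    rw [← mulVec_smul, ← h, mulVec_mulVec, displacement_neg_mul_self hd, one_mulVec]
  rcases eq_or_ne c 0 with rfl | hc
  · rw [hψ, zero_smul, mulVec_zero, smul_zero]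
  · rw [eq_inv_smul_iff₀ hc, ← hψ]

/-- The group of phase space points whose Weyl operators have `ψ` as an eigenvector. -/
def weylStabilizer (hd : Odd d) (ψ : QV d n → ℂ) : AddSubgroup (PhaseSpace d n) where
  carrier := {x | ∃ c : ℂ, displacement x *ᵥ ψ = c • ψ}
  zero_mem' := ⟨1, by rw [displacement_zero, one_mulVec, one_smul]⟩
  add_mem' := by
    rintro x y ⟨c, hc⟩ ⟨c', hc'⟩
    refine ⟨(ch d ((2 : ZMod d)⁻¹ * symp x y))⁻¹ * (c' * c), ?_⟩
    rw [mul_smul, eq_inv_smul_iff₀ (ch_ne_zero _), ← smul_mulVec, ← displacement_mul hd,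
      ← mulVec_mulVec, hc', mulVec_smul, hc, smul_smul]
  neg_mem' := fun ⟨c, hc⟩ => ⟨c⁻¹, displacement_neg_mulVec_of_eq_smul hd hc⟩

theorem symp_eq_zero_of_mem_weylStabilizer (hd : Odd d) (hψ : ψ ≠ 0)
    (hx : x ∈ weylStabilizer hd ψ) (hy : y ∈ weylStabilizer hd ψ) : symp x y = 0 := by
  obtain ⟨c, hc⟩ := hx
  obtain ⟨c', hc'⟩ := hy
  have eigenvalue_ne_zero {z : PhaseSpace d n} {e : ℂ} (h : displacement z *ᵥ ψ = e • ψ) :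
      e ≠ 0 := by
    rintro rfl
    apply hψ
    rw [← one_mulVec ψ, ← displacement_neg_mul_self hd z, ← mulVec_mulVec, h, zero_smul,
      mulVec_zero]
  have hcomm := congrArg (· *ᵥ ψ) (displacement_mul_comm hd x y)
  simp only [smul_mulVec, ← mulVec_mulVec, hc, hc', mulVec_smul, smul_smul] at hcomm
  have hphase := smul_left_injective ℂ hψ hcomm
  rw [mul_comm c' c, eq_comm] at hphase
  exact (ch_eq_one_iff _).1 (mul_right_cancel₀
    (mul_ne_zero (eigenvalue_ne_zero hc) (eigenvalue_ne_zero hc')) (by linear_combination hphase))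

theorem mem_weylStabilizer_iff_norm_xi_eq_one (hd : Odd d) (hψ : star ψ ⬝ᵥ ψ = 1) :
    x ∈ weylStabilizer hd ψ ↔ ‖xi d n (vecMulVec ψ (star ψ)) x‖ = 1 := by
  have hφ : star (displacement (-x) *ᵥ ψ) ⬝ᵥ displacement (-x) *ᵥ ψ = 1 := by
    rw [star_mulVec, ← dotProduct_mulVec, mulVec_mulVec, displacement_conjTranspose hd,
      displacement_neg_mul_self hd, one_mulVec, hψ]
  rw [← neg_mem_iff, xi_vecMulVec]
  exact exists_eq_smul_iff_norm_dotProduct_eq_one hψ hφ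

/-- Lagrangian subgroups of phase space: isotropic for the symplectic form, and of the largest
order `d ^ n` this allows. -/
def IsLagrangian (S : AddSubgroup (PhaseSpace d n)) : Prop :=
  Nat.card S = d ^ n ∧ ∀ s ∈ S, ∀ t ∈ S, symp s t = 0

theorem star_dotProduct_self_of_isState_vecMulVec
    (h : IsState d n (vecMulVec ψ (star ψ))) : star ψ ⬝ᵥ ψ = 1 := by
  rw [dotProduct_comm, ← trace_vecMulVec, h.2]

theorem exists_isLagrangian_of_isPureStabilizer (hd : Odd d) {σ : Mat d n}
    (hσ : IsState d n σ) (h : IsPureStabilizer d n σ) :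
    ∃ S : AddSubgroup (PhaseSpace d n), IsLagrangian S ∧ ∀ s ∈ S, ‖xi d n σ s‖ = 1 := by
  obtain ⟨S, hcard, ψ, hψ, hσψ, hS⟩ := h
  replace hσψ : σ = vecMulVec ψ (star ψ) := hσψ
  have hunit := star_dotProduct_self_of_isState_vecMulVec (hσψ ▸ hσ)
  refine ⟨S, ⟨hcard, fun s hs t ht => ?_⟩, fun s hs => ?_⟩
  · exact symp_eq_zero_of_mem_weylStabilizer hd hψ (hS s hs) (hS t ht)
  · rw [hσψ]
    exact (mem_weylStabilizer_iff_norm_xi_eq_one hd hunit).1 (hS s hs)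

theorem isPureStabilizer_of_norm_xi_eq_zero_or_one (hd : Odd d) {σ : Mat d n}
    (hσ : IsState d n σ) (hpure : purity σ = 1)
    (hxi : ∀ x, ‖xi d n σ x‖ = 0 ∨ ‖xi d n σ x‖ = 1) : IsPureStabilizer d n σ := by
  obtain ⟨ψ, rfl⟩ := exists_eq_vecMulVec_of_purity_eq_one hσ.1 hσ.2 hpure
  have hunit := star_dotProduct_self_of_isState_vecMulVec hσ
  have hψ : ψ ≠ 0 := by
    rintro rfl
    simp at hunit
  have hindicator (x) : ‖xi d n (vecMulVec ψ (star ψ)) x‖ ^ 2 =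
      if x ∈ weylStabilizer hd ψ then 1 else 0 := by
    rw [mem_weylStabilizer_iff_norm_xi_eq_one hd hunit]
    rcases hxi x with h | h <;> simp [h]
  have hcard := sum_norm_xi_sq (vecMulVec ψ (star ψ))
  simp only [hindicator, Finset.sum_boole, hpure, mul_one] at hcard
  refine ⟨weylStabilizer hd ψ, ?_, ψ, hψ, rfl, fun x hx => hx⟩
  rw [Nat.card_eq_fintype_card, Fintype.card_subtype]
  exact_mod_cast hcard

end Stabilizer

section StabilizerState

variable {d n : ℕ} [Fact (Nat.Prime d)] {T : AddSubgroup (PhaseSpace d n)} {x y : PhaseSpace d n}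

/-- The Weyl operator at `x` conjugated by the Weyl operator at `z`, which multiplies it by the
character `⟨z, ·⟩`. -/
noncomputable def conjDisplacement (z x : PhaseSpace d n) : Mat d n :=
  ch d (symp z x) • displacement x

theorem conjDisplacement_mul (hd : Odd d) (z : PhaseSpace d n) (hxy : symp x y = 0) :
    conjDisplacement z x * conjDisplacement z y = conjDisplacement z (x + y) := by
  simp only [conjDisplacement, smul_mul_smul_comm, displacement_mul hd, hxy, mul_zero, ch_zero,
    one_smul, map_add, ch_add]

theorem conjDisplacement_conjTranspose (hd : Odd d) (z x : PhaseSpace d n) :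
    (conjDisplacement z x)ᴴ = conjDisplacement z (-x) := by
  simp only [conjDisplacement, conjTranspose_smul, displacement_conjTranspose hd, star_ch, map_neg]

/-- The normalised projection onto the common eigenspace of the Weyl operators in `T` whose
eigenvalues are given by the character `-⟨z, ·⟩`; for Lagrangian `T` it is a pure stabilizer
state. -/
noncomputable def stabilizerState (T : AddSubgroup (PhaseSpace d n)) (z : PhaseSpace d n) :
    Mat d n :=
  ((d : ℂ) ^ n)⁻¹ • ∑ t : T, conjDisplacement z t

theorem cast_pow_ne_zero : (d : ℂ) ^ n ≠ 0 :=
  pow_ne_zero n (Nat.cast_ne_zero.2 (Fact.out : d.Prime).ne_zero)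

theorem xi_stabilizerState (hd : Odd d) (z : PhaseSpace d n) (hx : x ∈ T) :
    xi d n (stabilizerState T z) x = ch d (symp z x) := by
  simp only [xi_eq_trace, stabilizerState, conjDisplacement, smul_mul, Finset.sum_mul, trace_smul,
    trace_sum]
  simp only [← xi_eq_trace, xi_displacement hd, smul_eq_mul]
  rw [Finset.sum_eq_single ⟨x, hx⟩ (fun t _ ht => ?_) (by simp), if_pos rfl, mul_comm,
    mul_inv_cancel_right₀ cast_pow_ne_zero]
  rw [if_neg fun h => ht (Subtype.ext h.symm), mul_zero]

theorem stabilizerState_isHermitian (hd : Odd d) (z : PhaseSpace d n) :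
    (stabilizerState T z).IsHermitian := by
  simp only [IsHermitian, stabilizerState, conjTranspose_smul, conjTranspose_sum,
    conjDisplacement_conjTranspose hd, star_inv₀, star_pow, star_natCast]
  congr 1
  exact Equiv.sum_comp (Equiv.neg T) fun t : T => conjDisplacement z t

theorem stabilizerState_mul_self (hd : Odd d) (hT : IsLagrangian T) (z : PhaseSpace d n) :
    stabilizerState T z * stabilizerState T z = stabilizerState T z := by
  have absorb (s : T) : ∑ t : T, conjDisplacement z s * conjDisplacement z t =
      ∑ t : T, conjDisplacement z (t : PhaseSpace d n) := by
    rw [← Equiv.sum_comp (Equiv.addLeft s) fun t : T => conjDisplacement z (t : PhaseSpace d n)]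
    exact Finset.sum_congr rfl fun t _ => conjDisplacement_mul hd z (hT.2 s s.2 t t.2)
  rw [stabilizerState, smul_mul_smul_comm, Finset.sum_mul_sum]
  simp only [absorb]
  rw [Finset.sum_const, Finset.card_univ, ← Nat.card_eq_fintype_card, hT.1,
    ← Nat.cast_smul_eq_nsmul ℂ, Nat.cast_pow, smul_smul, mul_assoc,
    inv_mul_cancel₀ cast_pow_ne_zero, mul_one]

theorem stabilizerState_isState (hd : Odd d) (hT : IsLagrangian T) (z : PhaseSpace d n) :
    IsState d n (stabilizerState T z) := by
  constructor
  · have := posSemidef_conjTranspose_mul_self (stabilizerState T z)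
    rwa [(stabilizerState_isHermitian hd z).eq, stabilizerState_mul_self hd hT] at this
  · rw [← xi_zero, xi_stabilizerState hd z (zero_mem T), map_zero, ch_zero]

theorem sum_stabilizerState (T : AddSubgroup (PhaseSpace d n)) :
    ∑ z, stabilizerState T z = (d : ℂ) ^ n • (1 : Mat d n) := by
  simp only [stabilizerState, conjDisplacement]
  rw [← Finset.smul_sum, Finset.sum_comm]
  simp only [← Finset.sum_smul, sum_ch_symp]
  rw [Finset.sum_eq_single 0 (fun t _ ht => ?_) (by simp), AddSubgroup.coe_zero, if_pos rfl,
    displacement_zero, smul_smul, sq, inv_mul_cancel_left₀ cast_pow_ne_zero]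
  rw [if_neg (mt ZeroMemClass.coe_eq_zero.1 ht), zero_smul]

end StabilizerState

section PhaseScale

variable {d n : ℕ} [Fact (Nat.Prime d)] {a b : ZMod d}

/-- The scaling `(p, q) ↦ (a p, b q)` of phase space. -/
def phaseScale (a b : ZMod d) : PhaseSpace d n →ₗ[ZMod d] PhaseSpace d n :=
  LinearMap.prodMap (a • LinearMap.id) (b • LinearMap.id)

theorem phaseScale_apply (a b : ZMod d) (x : PhaseSpace d n) :
    phaseScale a b x = (a • x.1, b • x.2) := rfl

theorem phaseScale_bijective (ha : a ≠ 0) (hb : b ≠ 0) :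
    Function.Bijective (phaseScale a b : PhaseSpace d n →ₗ[ZMod d] PhaseSpace d n) :=
  (MulAction.bijective₀ ha).prodMap (MulAction.bijective₀ hb)

theorem symp_phaseScale (a b : ZMod d) (x y : PhaseSpace d n) :
    symp (phaseScale a b x) (phaseScale a b y) = a * b * symp x y := by
  simp only [symp_apply, phaseScale_apply, smul_dotProduct, dotProduct_smul, smul_eq_mul]
  ring

theorem IsLagrangian.comap_phaseScale {S : AddSubgroup (PhaseSpace d n)} (hS : IsLagrangian S)
    (ha : a ≠ 0) (hb : b ≠ 0) :
    IsLagrangian (S.comap (phaseScale a b).toAddMonoidHom) := by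
  refine ⟨?_, fun s hs t ht => ?_⟩
  · rw [← hS.1]
    exact Nat.card_congr ((Equiv.ofBijective _ (phaseScale_bijective ha hb)).subtypeEquiv
      fun _ => Iff.rfl)
  · have := hS.2 _ hs _ ht
    exact (mul_eq_zero.1 ((symp_phaseScale a b s t).symm.trans this)).resolve_left
      (mul_ne_zero ha hb)

end PhaseScale

section CharacteristicProduct

variable {d n : ℕ} [Fact (Nat.Prime d)] {ρ σ τ : Mat d n}

theorem one_le_purity_of_norm_xi_eq_one {S : AddSubgroup (PhaseSpace d n)} (hS : IsLagrangian S)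
    (h : ∀ s ∈ S, ‖xi d n ρ s‖ = 1) : 1 ≤ purity ρ := by
  have hd : (0 : ℝ) < (d : ℝ) ^ n := pow_pos (Nat.cast_pos.2 (Fact.out : d.Prime).pos) n
  have key : (d : ℝ) ^ n ≤ ∑ x, ‖xi d n ρ x‖ ^ 2 :=
    calc (d : ℝ) ^ n = ∑ x with x ∈ S, ‖xi d n ρ x‖ ^ 2 := by
          rw [Finset.sum_congr rfl fun x hx => by rw [h x (Finset.mem_filter.1 hx).2, one_pow],
            Finset.sum_const, ← Fintype.card_subtype, nsmul_one, ← Nat.cast_pow, ← hS.1,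
            ← Nat.card_eq_fintype_card]
      _ ≤ _ := Finset.sum_le_univ_sum_of_nonneg fun x => sq_nonneg _
  rw [sum_norm_xi_sq] at key
  exact le_of_mul_le_mul_left (by rwa [mul_one]) hd

theorem isPureStabilizer_of_xi_eq_mul (hd : Odd d) (hρ : IsState d n ρ) (hσ : IsState d n σ)
    {φ ψ : PhaseSpace d n → PhaseSpace d n} (hφ : Function.Bijective φ)
    (hψ : Function.Bijective ψ) (hxi : ∀ x, xi d n τ x = xi d n ρ (φ x) * xi d n σ (ψ x))
    (hτ : 1 ≤ purity τ) : IsPureStabilizer d n σ := by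
  have hpos : (0 : ℝ) < (d : ℝ) ^ n := pow_pos (Nat.cast_pos.2 (Fact.out : d.Prime).pos) n
  have sq_mem {θ : Mat d n} (hθ : IsState d n θ) (x) : ‖xi d n θ x‖ ^ 2 ∈ Set.Icc 0 1 :=
    ⟨sq_nonneg _, pow_le_one₀ (norm_nonneg _) (norm_xi_le_one hd hθ x)⟩
  have hsumρ := (hφ.sum_comp fun x => ‖xi d n ρ x‖ ^ 2).trans (sum_norm_xi_sq ρ)
  have hsumσ := (hψ.sum_comp fun x => ‖xi d n σ x‖ ^ 2).trans (sum_norm_xi_sq σ)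
  have hsumτ : (d : ℝ) ^ n ≤ ∑ x, ‖xi d n ρ (φ x)‖ ^ 2 * ‖xi d n σ (ψ x)‖ ^ 2 := by
    simp only [← mul_pow, ← norm_mul, ← hxi, sum_norm_xi_sq]
    exact le_mul_of_one_le_right hpos.le hτ
  have hzero_one := eq_zero_or_one_of_sum_le_sum_mul (fun x => sq_mem hρ (φ x))
    (fun x => sq_mem hσ (ψ x))
    (hsumρ.trans_le <| (mul_le_of_le_one_right hpos.le (purity_le_one hρ.1 hρ.2)).trans hsumτ)
    (hsumσ.trans_le <| (mul_le_of_le_one_right hpos.le (purity_le_one hσ.1 hσ.2)).trans hsumτ)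
  have hpure : 1 ≤ purity σ := by
    have : (d : ℝ) ^ n ≤ (d : ℝ) ^ n * purity σ := hsumσ ▸ hsumτ.trans
      (Finset.sum_le_sum fun x _ => mul_le_of_le_one_left (sq_nonneg _) (sq_mem hρ _).2)
    exact le_of_mul_le_mul_left (by rwa [mul_one]) hpos
  refine isPureStabilizer_of_norm_xi_eq_zero_or_one hd hσ
    ((purity_le_one hσ.1 hσ.2).antisymm hpure) fun x => ?_
  obtain ⟨x, rfl⟩ := hψ.surjective x
  exact (hzero_one x).imp (pow_eq_zero_iff two_ne_zero).1
    (pow_eq_one_iff_of_nonneg (norm_nonneg _) two_ne_zero).1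

end CharacteristicProduct

section StateSpace

variable {d n : ℕ} [Fact (Nat.Prime d)]

theorem isClosed_setOf_isState : IsClosed {ρ : Mat d n | IsState d n ρ} := by
  simp only [IsState, posSemidef_iff_dotProduct_mulVec, IsHermitian, Set.ofPred_and,
    Set.ofPred_forall]
  refine ((isClosed_eq (by fun_prop) (by fun_prop)).inter (isClosed_iInter fun x => ?_)).inter
    (isClosed_eq (by fun_prop) (by fun_prop))
  exact isClosed_le (by fun_prop) (by fun_prop)

theorem isCompact_setOf_isState : IsCompact {ρ : Mat d n | IsState d n ρ} := by
  have hbox : IsCompact (Set.univ.pi fun _ : QV d n => Set.univ.pi fun _ : QV d n =>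
      Metric.closedBall (0 : ℂ) 1) :=
    isCompact_univ_pi fun _ => isCompact_univ_pi fun _ => isCompact_closedBall _ _
  refine hbox.of_isClosed_subset isClosed_setOf_isState fun ρ hρ a _ b _ => ?_
  rw [mem_closedBall_zero_iff, ← pow_le_one_iff_of_nonneg (norm_nonneg _) two_ne_zero]
  exact (norm_sq_entry_le_purity ρ a b).trans (purity_le_one hρ.1 hρ.2)

end StateSpace

section Holevo

variable {d n m : ℕ} [Fact (Nat.Prime d)] {E : Mat d n → Mat d n} {a : ℝ} {p : Fin m → ℝ}
  {ρs : Fin m → Mat d n}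

/-- A finite ensemble of states: the state `ρs i` occurs with probability `p i`. -/
def IsEnsemble (p : Fin m → ℝ) (ρs : Fin m → Mat d n) : Prop :=
  (∀ i, 0 ≤ p i) ∧ ∑ i, p i = 1 ∧ ∀ i, IsState d n (ρs i)

/-- The Holevo information of an ensemble sent through `E`, whose supremum over all ensembles is
the Holevo capacity of `E`. -/
noncomputable def holevoInfo (E : Mat d n → Mat d n) (p : Fin m → ℝ) (ρs : Fin m → Mat d n) : ℝ :=
  vnEnt (∑ i, (p i : ℂ) • E (ρs i)) - ∑ i, p i * vnEnt (E (ρs i))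

theorem IsEnsemble.isState_sum (h : IsEnsemble p ρs) :
    IsState d n (∑ i, (p i : ℂ) • ρs i) := by
  refine ⟨posSemidef_sum _ fun i _ => (h.2.2 i).1.smul (by exact_mod_cast h.1 i), ?_⟩
  simp only [trace_sum, trace_smul, (h.2.2 _).2, smul_eq_mul, mul_one]
  exact_mod_cast h.2.1

theorem IsEnsemble.map (h : IsEnsemble p ρs) (hE : ∀ ρ, IsState d n ρ → IsState d n (E ρ)) :
    IsEnsemble p fun i => E (ρs i) :=
  ⟨h.1, h.2.1, fun i => hE _ (h.2.2 i)⟩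

theorem holevoCap_le (ha : 0 ≤ a)
    (h : ∀ (m : ℕ) (p : Fin m → ℝ) (ρs : Fin m → Mat d n), IsEnsemble p ρs →
      holevoInfo E p ρs ≤ a) : holevoCap d n E ≤ a :=
  Real.iSup_le (fun m => Real.iSup_le (fun p => Real.iSup_le (fun ρs =>
    Real.iSup_le (h m p ρs) ha) ha) ha) ha

theorem holevoInfo_le_holevoCap (ha : 0 ≤ a)
    (h : ∀ (m : ℕ) (p : Fin m → ℝ) (ρs : Fin m → Mat d n), IsEnsemble p ρs →
      holevoInfo E p ρs ≤ a) (hρs : IsEnsemble p ρs) : holevoInfo E p ρs ≤ holevoCap d n E := by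
  have hstates m p ρs := Real.iSup_le (h m p ρs) ha
  have hweights m p := Real.iSup_le (hstates m p) ha
  have hsize m := Real.iSup_le (hweights m) ha
  exact le_ciSup_of_le ⟨a, Set.forall_mem_range.2 hsize⟩ m <|
    le_ciSup_of_le ⟨a, Set.forall_mem_range.2 (hweights m)⟩ p <|
    le_ciSup_of_le ⟨a, Set.forall_mem_range.2 (hstates m p)⟩ ρs <|
    le_ciSup_of_le ⟨a, Set.forall_mem_range.2 (h m p ρs)⟩ hρs le_rfl

theorem holevoInfo_le_of_purity_le (hE : ∀ ρ, IsState d n ρ → IsState d n (E ρ)) {M : ℝ}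
    (hM : ∀ ρ, IsState d n ρ → purity (E ρ) ≤ M) (h : IsEnsemble p ρs) :
    holevoInfo E p ρs ≤ n * Real.log d - (1 - M) := by
  have hmix := vnEnt_le (h.map hE).isState_sum
  have hmean : 1 - M ≤ ∑ i, p i * vnEnt (E (ρs i)) :=
    calc 1 - M = ∑ i, p i * (1 - M) := by rw [← Finset.sum_mul, h.2.1, one_mul]
      _ ≤ _ := Finset.sum_le_sum fun i _ => mul_le_mul_of_nonneg_left
        ((sub_le_sub_left (hM _ (h.2.2 i)) 1).trans (one_sub_purity_le_vnEnt (hE _ (h.2.2 i))))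
        (h.1 i)
  rw [holevoInfo]
  linarith

theorem holevoInfo_le (hE : ∀ ρ, IsState d n ρ → IsState d n (E ρ)) (h : IsEnsemble p ρs) :
    holevoInfo E p ρs ≤ n * Real.log d := by
  have := holevoInfo_le_of_purity_le hE (fun ρ hρ => purity_le_one (hE ρ hρ).1 (hE ρ hρ).2) h
  rwa [sub_self, sub_zero] at this

theorem exists_purity_eq_one_of_holevoCap_eq (hcont : Continuous E)
    (hE : ∀ ρ, IsState d n ρ → IsState d n (E ρ)) (hne : ∃ ρ : Mat d n, IsState d n ρ)
    (hcap : holevoCap d n E = n * Real.log d) : ∃ ρ, IsState d n ρ ∧ purity (E ρ) = 1 := by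
  have hpurity : Continuous fun ρ => purity (E ρ) := by
    unfold purity
    fun_prop
  obtain ⟨ρ, hρ, hmax⟩ := isCompact_setOf_isState.exists_isMaxOn hne hpurity.continuousOn
  have hEρ := hE ρ hρ
  have hbound : holevoCap d n E ≤ n * Real.log d - (1 - purity (E ρ)) :=
    holevoCap_le (sub_nonneg.2 ((one_sub_purity_le_vnEnt hEρ).trans (vnEnt_le hEρ)))
      fun m p ρs h => holevoInfo_le_of_purity_le hE (fun τ hτ => hmax hτ) h
  exact ⟨ρ, hρ, (purity_le_one hEρ.1 hEρ.2).antisymm (by linarith)⟩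

theorem holevoCap_eq_of_pure_family {κ : Type*} [Fintype κ] [Nonempty κ] {τ : κ → Mat d n} {c : ℂ}
    (hE : ∀ ρ, IsState d n ρ → IsState d n (E ρ)) (hτ : ∀ i, IsState d n (τ i))
    (hpure : ∀ i, purity (E (τ i)) = 1) (hsum : ∑ i, E (τ i) = c • 1) :
    holevoCap d n E = n * Real.log d := by
  have hlog : 0 ≤ (n : ℝ) * Real.log d :=
    mul_nonneg n.cast_nonneg (Real.log_natCast_nonneg d)
  have hinfo_le (m : ℕ) (p : Fin m → ℝ) (ρs : Fin m → Mat d n) (h : IsEnsemble p ρs) :=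
    holevoInfo_le hE h
  refine (holevoCap_le hlog hinfo_le).antisymm ?_
  let e := (Fintype.equivFin κ).symm
  let w : ℝ := (Fintype.card κ : ℝ)⁻¹
  have hensemble : IsEnsemble (fun _ => w) fun i => τ (e i) := by
    refine ⟨fun _ => by positivity, ?_, fun i => hτ _⟩
    rw [Finset.sum_const, Finset.card_univ, Fintype.card_fin, nsmul_eq_mul]
    exact mul_inv_cancel₀ (Nat.cast_ne_zero.2 Fintype.card_ne_zero)
  have hmix : ∑ i, (w : ℂ) • E (τ (e i)) = ((w : ℂ) * c) • 1 := by
    rw [← Finset.smul_sum, e.sum_comp fun i => E (τ i), hsum, smul_smul]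
  have hstate := (hensemble.map hE).isState_sum
  calc (n : ℝ) * Real.log d = holevoInfo E (fun _ => w) fun i => τ (e i) := by
        simp only [holevoInfo, vnEnt_eq_zero_of_purity_eq_one (hE _ (hτ _)) (hpure _), mul_zero,
          Finset.sum_const_zero, sub_zero]
        rw [hmix] at hstate ⊢
        rw [vnEnt_smul_one hstate]
    _ ≤ holevoCap d n E := holevoInfo_le_holevoCap hlog hinfo_le hensemble

end Holevo

section Convolution

variable {d n : ℕ} [Fact (Nat.Prime d)] {g00 g01 g10 g11 : ZMod d} {ρ σ : Mat d n}

/-- The linear bijection `(k, l) ↦ (g₀₀ k + g₁₀ l, g₀₁ k + g₁₁ l)` of pairs of basis labels, whose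
inverse is the permutation of the computational basis effected by `convU`. -/
def convLabelEquiv (hdet : g00 * g11 - g01 * g10 ≠ 0) : (QV d n × QV d n) ≃ (QV d n × QV d n) where
  toFun x := (g00 • x.1 + g10 • x.2, g01 • x.1 + g11 • x.2)
  invFun y := ((g00 * g11 - g01 * g10)⁻¹ • (g11 • y.1 - g10 • y.2),
    (g00 * g11 - g01 * g10)⁻¹ • (g00 • y.2 - g01 • y.1))
  left_inv x := by
    ext a <;> simp only [Pi.smul_apply, Pi.add_apply, Pi.sub_apply, smul_eq_mul] <;>
      field_simp <;> ring
  right_inv y := by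
    ext a <;> simp only [Pi.smul_apply, Pi.add_apply, Pi.sub_apply, smul_eq_mul] <;>
      field_simp <;> ring

theorem convLabelEquiv_apply (hdet : g00 * g11 - g01 * g10 ≠ 0) (k l : QV d n) :
    convLabelEquiv hdet (k, l) = (g00 • k + g10 • l, g01 • k + g11 • l) := rfl

theorem convU_apply (hdet : g00 * g11 - g01 * g10 ≠ 0) (x y : QV d n × QV d n) :
    convU d n g00 g01 g10 g11 x y = if y = convLabelEquiv hdet x then 1 else 0 := by
  have hsymm : ((fun a => (g00 * g11 - g01 * g10)⁻¹ * g11 * y.1 a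
        - (g00 * g11 - g01 * g10)⁻¹ * g10 * y.2 a,
      fun a => -((g00 * g11 - g01 * g10)⁻¹ * g01) * y.1 a
        + (g00 * g11 - g01 * g10)⁻¹ * g00 * y.2 a) : QV d n × QV d n) =
      (convLabelEquiv hdet).symm y := by
    ext a <;> simp only [convLabelEquiv, Equiv.coe_fn_symm_mk, Pi.smul_apply, Pi.sub_apply,
      smul_eq_mul] <;> ring
  simp only [convU, Matrix.of_apply, hsymm, Equiv.eq_symm_apply, eq_comm]

theorem conv_apply (hdet : g00 * g11 - g01 * g10 ≠ 0) (ρ σ : Mat d n) (k k' : QV d n) :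
    conv d n g00 g01 g10 g11 ρ σ k k' =
      ∑ l, ρ (g00 • k + g10 • l) (g00 • k' + g10 • l) *
        σ (g01 • k + g11 • l) (g01 • k' + g11 • l) := by
  simp only [conv, ptrB, Matrix.of_apply, Matrix.mul_apply, conjTranspose_apply, convU_apply hdet,
    apply_ite star, star_one, star_zero, mul_ite, mul_one, mul_zero, ite_mul, one_mul, zero_mul,
    Finset.sum_ite_eq', Finset.mem_univ, if_true]
  rfl

theorem isLinearMap_conv (hdet : g00 * g11 - g01 * g10 ≠ 0) (σ : Mat d n) :
    IsLinearMap ℂ fun ρ => conv d n g00 g01 g10 g11 ρ σ where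
  map_add ρ ρ' := by
    ext k k'
    simp only [conv_apply hdet, Matrix.add_apply, add_mul, Finset.sum_add_distrib]
  map_smul c ρ := by
    ext k k'
    simp only [conv_apply hdet, Matrix.smul_apply, smul_eq_mul, mul_assoc, Finset.mul_sum]

theorem continuous_conv (hdet : g00 * g11 - g01 * g10 ≠ 0) (σ : Mat d n) :
    Continuous fun ρ => conv d n g00 g01 g10 g11 ρ σ :=
  ((isLinearMap_conv hdet σ).mk' _).continuous_of_finiteDimensional

theorem conv_one_left (h00 : g00 ≠ 0) (h11 : g11 ≠ 0) (hdet : g00 * g11 - g01 * g10 ≠ 0)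
    (σ : Mat d n) : conv d n g00 g01 g10 g11 1 σ = σ.trace • 1 := by
  ext k k'
  rw [conv_apply hdet, Matrix.smul_apply]
  rcases eq_or_ne k k' with rfl | hk
  · have hshift : Function.Bijective fun l : QV d n => g01 • k + g11 • l :=
      (AddGroup.addLeft_bijective _).comp (MulAction.bijective₀ h11)
    simp only [one_apply_eq, one_mul, smul_eq_mul, mul_one]
    exact hshift.sum_comp σ.diag
  · have hne (l : QV d n) : g00 • k + g10 • l ≠ g00 • k' + g10 • l :=
      fun h => hk (MulAction.injective₀ h00 (add_right_cancel h))
    simp only [one_apply_ne (hne _), one_apply_ne hk, zero_mul, Finset.sum_const_zero, smul_zero]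

theorem xi_conv (hdet : g00 * g11 - g01 * g10 ≠ 0) (ρ σ : Mat d n) (x : PhaseSpace d n) :
    xi d n (conv d n g00 g01 g10 g11 ρ σ) x =
      xi d n ρ (phaseScale ((g00 * g11 - g01 * g10)⁻¹ * g11) g00 x) *
        xi d n σ (phaseScale (-((g00 * g11 - g01 * g10)⁻¹ * g10)) g01 x) := by
  obtain ⟨p, q⟩ := x
  simp only [xi_apply, phaseScale_apply]
  rw [Finset.sum_mul_sum, ← Fintype.sum_prod_type', ← (convLabelEquiv hdet).sum_comp,
    Fintype.sum_prod_type]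
  refine Finset.sum_congr rfl fun k _ => ?_
  rw [conv_apply hdet, Finset.sum_mul]
  refine Finset.sum_congr rfl fun l _ => ?_
  set N := (g00 * g11 - g01 * g10)⁻¹
  have hN : N * (g00 * g11 - g01 * g10) = 1 := inv_mul_cancel₀ hdet
  have hphase : -(p ⬝ᵥ k) + (2 : ZMod d)⁻¹ * (p ⬝ᵥ q) =
      (-((N * g11) • p ⬝ᵥ (g00 • k + g10 • l)) +
        (2 : ZMod d)⁻¹ * ((N * g11) • p ⬝ᵥ g00 • q)) +
      (-((-(N * g10)) • p ⬝ᵥ (g01 • k + g11 • l)) +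
        (2 : ZMod d)⁻¹ * ((-(N * g10)) • p ⬝ᵥ g01 • q)) := by
    simp only [smul_dotProduct, dotProduct_add, dotProduct_smul, smul_eq_mul]
    linear_combination (p ⬝ᵥ k - (2 : ZMod d)⁻¹ * (p ⬝ᵥ q)) * hN
  simp only [convLabelEquiv_apply, smul_sub, ← sub_add_eq_add_sub]
  rw [hphase, ch_add]
  ring

theorem conv_isState (hdet : g00 * g11 - g01 * g10 ≠ 0) (hρ : IsState d n ρ)
    (hσ : IsState d n σ) : IsState d n (conv d n g00 g01 g10 g11 ρ σ) := by
  constructor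
  · have hsum : conv d n g00 g01 g10 g11 ρ σ = ∑ l, (kroneckerMap (· * ·) ρ σ).submatrix
        (fun k => convLabelEquiv hdet (k, l)) (fun k => convLabelEquiv hdet (k, l)) := by
      ext k k'
      rw [conv_apply hdet, Matrix.sum_apply]
      rfl
    rw [hsum]
    exact posSemidef_sum _ fun l _ => (hρ.1.kronecker hσ.1).submatrix _
  · rw [← xi_zero, xi_conv hdet, map_zero, map_zero, xi_zero, xi_zero, hρ.2, hσ.2, one_mul]

end Convolution

section MatchedStabilizer

variable {d n : ℕ} [Fact (Nat.Prime d)] {S : AddSubgroup (PhaseSpace d n)} {σ τ : Mat d n}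
  {a a' b b' : ZMod d}

theorem purity_eq_one_of_xi_eq_stabilizerState_mul (hd : Odd d) (hS : IsLagrangian S)
    (hσ : ∀ s ∈ S, ‖xi d n σ s‖ = 1) (ha : a ≠ 0) (hb : b ≠ 0) (ha' : a' ≠ 0) (hb' : b' ≠ 0)
    (z : PhaseSpace d n) (hτ : IsState d n τ)
    (hxi : ∀ x, xi d n τ x =
      xi d n (stabilizerState (S.comap (phaseScale (a' / a) (b' / b)).toAddMonoidHom) z)
        (phaseScale a b x) * xi d n σ (phaseScale a' b' x)) :
    purity τ = 1 := by
  refine (purity_le_one hτ.1 hτ.2).antisymm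
    (one_le_purity_of_norm_xi_eq_one (hS.comap_phaseScale ha' hb') fun x hx => ?_)
  have hrescale : phaseScale (a' / a) (b' / b) (phaseScale a b x) = phaseScale a' b' x := by
    simp only [phaseScale_apply, smul_smul, div_mul_cancel₀ _ ha, div_mul_cancel₀ _ hb]
  have hmem : phaseScale a b x ∈ S.comap (phaseScale (a' / a) (b' / b)).toAddMonoidHom := by
    change phaseScale (a' / a) (b' / b) (phaseScale a b x) ∈ S
    rwa [hrescale]
  rw [hxi, norm_mul, xi_stabilizerState hd z hmem, norm_ch, one_mul]
  exact hσ _ hx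

end MatchedStabilizer

section HolevoCapacity

variable {d n : ℕ} [Fact (Nat.Prime d)] {g00 g01 g10 g11 : ZMod d} {σ : Mat d n}

theorem isPureStabilizer_of_holevoCap_conv_eq (hd : Odd d) (h00 : g00 ≠ 0) (h01 : g01 ≠ 0)
    (h10 : g10 ≠ 0) (h11 : g11 ≠ 0) (hdet : g00 * g11 - g01 * g10 ≠ 0) (hσ : IsState d n σ)
    (hcap : holevoCap d n (fun ρ => conv d n g00 g01 g10 g11 ρ σ) = n * Real.log d) :
    IsPureStabilizer d n σ := by
  obtain ⟨ρ, hρ, hpure⟩ := exists_purity_eq_one_of_holevoCap_eq (continuous_conv hdet σ)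
    (fun ρ hρ => conv_isState hdet hρ hσ) ⟨σ, hσ⟩ hcap
  have hN := inv_ne_zero hdet
  exact isPureStabilizer_of_xi_eq_mul hd hρ hσ (phaseScale_bijective (mul_ne_zero hN h11) h00)
    (phaseScale_bijective (neg_ne_zero.2 (mul_ne_zero hN h10)) h01) (xi_conv hdet ρ σ) hpure.ge

theorem holevoCap_conv_eq_of_isPureStabilizer (hd : Odd d) (h00 : g00 ≠ 0) (h01 : g01 ≠ 0)
    (h10 : g10 ≠ 0) (h11 : g11 ≠ 0) (hdet : g00 * g11 - g01 * g10 ≠ 0) (hσ : IsState d n σ)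
    (hstab : IsPureStabilizer d n σ) :
    holevoCap d n (fun ρ => conv d n g00 g01 g10 g11 ρ σ) = n * Real.log d := by
  obtain ⟨S, hS, hSσ⟩ := exists_isLagrangian_of_isPureStabilizer hd hσ hstab
  have hE (ρ : Mat d n) (hρ : IsState d n ρ) := conv_isState hdet hρ hσ
  set a := (g00 * g11 - g01 * g10)⁻¹ * g11
  set a' := -((g00 * g11 - g01 * g10)⁻¹ * g10)
  have ha : a ≠ 0 := mul_ne_zero (inv_ne_zero hdet) h11
  have ha' : a' ≠ 0 := neg_ne_zero.2 (mul_ne_zero (inv_ne_zero hdet) h10)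
  set T := S.comap (phaseScale (a' / a) (g01 / g00)).toAddMonoidHom
  have hT : IsLagrangian T := hS.comap_phaseScale (div_ne_zero ha' ha) (div_ne_zero h01 h00)
  have hstate := stabilizerState_isState hd hT
  have hpure z := purity_eq_one_of_xi_eq_stabilizerState_mul hd hS hSσ ha h00 ha' h01 z
    (hE _ (hstate z)) (xi_conv hdet _ σ)
  refine holevoCap_eq_of_pure_family hE hstate hpure (c := (d : ℂ) ^ n * σ.trace) ?_
  have hlin := isLinearMap_conv hdet σ
  calc ∑ z, conv d n g00 g01 g10 g11 (stabilizerState T z) σ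
      = conv d n g00 g01 g10 g11 (∑ z, stabilizerState T z) σ :=
        (map_sum (hlin.mk' _) _ _).symm
    _ = ((d : ℂ) ^ n * σ.trace) • 1 := by
        rw [sum_stabilizerState, hlin.map_smul, conv_one_left h00 h11 hdet, smul_smul]

end HolevoCapacity

/-- Maximizer of the Holevo capacity: `χ(E_σ) = n log d` iff `σ` is
a pure stabilizer state, where `E_σ : ρ ↦ ρ ⊠ σ`. -/
theorem statement17 (d n : ℕ) [Fact (Nat.Prime d)] (hd : Odd d) (hn : 1 ≤ n)
    (g00 g01 g10 g11 : ZMod d) (h00 : g00 ≠ 0) (h01 : g01 ≠ 0)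
    (h10 : g10 ≠ 0) (h11 : g11 ≠ 0) (hdet : g00 * g11 - g01 * g10 ≠ 0)
    (σ : Mat d n) (hσ : IsState d n σ) :
    holevoCap d n (fun ρ => conv d n g00 g01 g10 g11 ρ σ) = (n : ℝ) * Real.log d ↔
      IsPureStabilizer d n σ :=
  ⟨isPureStabilizer_of_holevoCap_conv_eq hd h00 h01 h10 h11 hdet hσ,
    holevoCap_conv_eq_of_isPureStabilizer hd h00 h01 h10 h11 hdet hσ⟩

end PaperQI
end

section
/- Second law of thermodynamics for quantum convolution: for every n-qudit state ρ, every α ∈ [0, +∞], and every integer N ≥ 0, H_α(⊠^{N+1} ρ) ≥ H_α(⊠^N ρ); that is, the Rényi entropy of the repeated self-convolution is non-decreasing in the number of convolutions. -/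
open scoped BigOperators ComplexOrder Classical ENNReal
open Matrix

namespace PaperQI

/-!
Repeated convolution applies the linear map `A ↦ A ⊠ ρ`, which is positive, trace preserving
and unital. Such a map is the matrix analogue of a doubly stochastic matrix: read in an eigenbasis
of `A` on the input side and in an eigenbasis of `A ⊠ ρ` on the output side, its action on diagonal
matrices is a doubly stochastic matrix sending the spectrum of `A` to that of `A ⊠ ρ`. Every Rényi
entropy is a Schur-concave function of the spectrum, by Jensen's inequality.
-/

section SchurConvexity

theorem ncard_support_eq_sum_indicator {ι R : Type*} [Fintype ι] [AddCommMonoidWithOne R]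
    (x : ι → R) :
    ((Function.support x).ncard : R) = ∑ i, ({0}ᶜ : Set R).indicator (1 : R → R) (x i) := by
  simp only [Set.ncard_eq_toFinset_card', Set.toFinset_card, Fintype.card_subtype,
    Finset.natCast_card_filter, Function.mem_support, Set.indicator_apply,
    Set.mem_compl_singleton_iff, Pi.one_apply]

theorem mulVec_ne_zero_of_mem_colStochastic {ι R : Type*} [Fintype ι] [DecidableEq ι] [Semiring R]
    [PartialOrder R] [IsOrderedRing R] {D : Matrix ι ι R} {x : ι → R} (hD : D ∈ colStochastic R ι)
    (hx : 0 ≤ x) (hx0 : x ≠ 0) : D *ᵥ x ≠ 0 := by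
  intro h
  have hsum : ∑ i, x i = 0 := by
    rw [← sum_mulVec_of_mem_colStochastic hD, h]
    simp
  exact hx0 ((Fintype.sum_eq_zero_iff_of_nonneg hx).1 hsum)

variable {ι 𝕜 β : Type*} [Fintype ι] [DecidableEq ι] [Field 𝕜] [LinearOrder 𝕜]
  [IsStrictOrderedRing 𝕜] [AddCommGroup β] [PartialOrder β] [IsOrderedAddMonoid β] [Module 𝕜 β]
  [IsStrictOrderedModule 𝕜 β] {D : Matrix ι ι 𝕜} {s : Set 𝕜} {f : 𝕜 → β} {x : ι → 𝕜}

theorem sum_map_mulVec_le_of_convexOn (hD : D ∈ doublyStochastic 𝕜 ι) (hf : ConvexOn 𝕜 s f)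
    (hx : ∀ i, x i ∈ s) : ∑ i, f ((D *ᵥ x) i) ≤ ∑ i, f (x i) :=
  calc ∑ i, f ((D *ᵥ x) i)
      ≤ ∑ i, ∑ j, D i j • f (x j) := Finset.sum_le_sum fun i _ =>
        hf.map_sum_le (fun _ _ => nonneg_of_mem_doublyStochastic hD)
          (sum_row_of_mem_doublyStochastic hD i) fun j _ => hx j
    _ = ∑ j, (∑ i, D i j) • f (x j) := by
        rw [Finset.sum_comm]
        simp only [Finset.sum_smul]
    _ = ∑ j, f (x j) := by
        simp only [sum_col_of_mem_doublyStochastic hD, one_smul]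

theorem sum_map_le_sum_map_mulVec_of_concaveOn (hD : D ∈ doublyStochastic 𝕜 ι)
    (hf : ConcaveOn 𝕜 s f) (hx : ∀ i, x i ∈ s) : ∑ i, f (x i) ≤ ∑ i, f ((D *ᵥ x) i) :=
  sum_map_mulVec_le_of_convexOn (β := βᵒᵈ) hD hf.dual hx

theorem concaveOn_indicator_compl_zero :
    ConcaveOn 𝕜 (Set.Ici 0) (({0}ᶜ : Set 𝕜).indicator (1 : 𝕜 → 𝕜)) := by
  refine ⟨convex_Ici 0, fun x hx y hy a b ha hb hab => ?_⟩
  simp only [Set.mem_Ici] at hx hy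
  simp only [smul_eq_mul, Set.indicator_apply, Set.mem_compl_singleton_iff, Pi.one_apply]
  by_cases h : a * x + b * y = 0
  · obtain ⟨hax, hby⟩ :=
      (add_eq_zero_iff_of_nonneg (mul_nonneg ha hx) (mul_nonneg hb hy)).1 h
    rcases mul_eq_zero.1 hax with rfl | rfl <;> rcases mul_eq_zero.1 hby with rfl | rfl <;> simp
  · rw [if_pos h]
    split_ifs <;> linarith

theorem ncard_support_le_ncard_support_mulVec (hD : D ∈ doublyStochastic 𝕜 ι) (hx : 0 ≤ x) :
    (Function.support x).ncard ≤ (Function.support (D *ᵥ x)).ncard := by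
  have h := sum_map_le_sum_map_mulVec_of_concaveOn hD concaveOn_indicator_compl_zero hx
  rw [← ncard_support_eq_sum_indicator, ← ncard_support_eq_sum_indicator] at h
  exact_mod_cast h

end SchurConvexity

section RenyiEntropy

theorem iSup_pos_of_nonneg_of_ne_zero {ι : Type*} [Finite ι] {x : ι → ℝ} (hx : 0 ≤ x)
    (hx0 : x ≠ 0) : 0 < ⨆ i, x i := by
  obtain ⟨i, hi⟩ := Function.ne_iff.1 hx0
  exact ((hx i).lt_of_ne' hi).trans_le (le_ciSup (Set.finite_range x).bddAbove i)

variable {ι : Type*} [Fintype ι]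

/-- The Rényi entropy `H_α` of a finite family of nonnegative weights, with the conventions
of `renyiEnt` for the orders `0`, `1` and `∞`. -/
noncomputable def renyiEntropy (α : ℝ≥0∞) (x : ι → ℝ) : ℝ :=
  if α = 0 then Real.log (Function.support x).ncard
  else if α = 1 then ∑ i, Real.negMulLog (x i)
  else if α = ⊤ then -Real.log (⨆ i, x i)
  else (1 - α.toReal)⁻¹ * Real.log (∑ i, x i ^ α.toReal)

variable {x : ι → ℝ}

theorem sum_rpow_pos_of_nonneg_of_ne_zero (hx : 0 ≤ x) (hx0 : x ≠ 0) (p : ℝ) :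
    0 < ∑ i, x i ^ p := by
  obtain ⟨i, hi⟩ := Function.ne_iff.1 hx0
  exact Finset.sum_pos' (fun j _ => Real.rpow_nonneg (hx j) p)
    ⟨i, Finset.mem_univ i, Real.rpow_pos_of_pos ((hx i).lt_of_ne' hi) p⟩

variable [DecidableEq ι] {D : Matrix ι ι ℝ}

theorem iSup_mulVec_le_of_mem_rowStochastic (hD : D ∈ rowStochastic ℝ ι) (x : ι → ℝ) :
    ⨆ i, (D *ᵥ x) i ≤ ⨆ i, x i := by
  cases isEmpty_or_nonempty ι
  · simp
  refine ciSup_le fun i => ?_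
  calc (D *ᵥ x) i = ∑ j, D i j * x j := rfl
    _ ≤ ∑ j, D i j * ⨆ k, x k := Finset.sum_le_sum fun j _ =>
        mul_le_mul_of_nonneg_left (le_ciSup (Set.finite_range x).bddAbove j)
          (nonneg_of_mem_rowStochastic hD)
    _ = ⨆ k, x k := by rw [← Finset.sum_mul, sum_row_of_mem_rowStochastic hD, one_mul]

theorem renyiEntropy_le_renyiEntropy_mulVec (hD : D ∈ doublyStochastic ℝ ι) (hx : 0 ≤ x)
    (α : ℝ≥0∞) : renyiEntropy α x ≤ renyiEntropy α (D *ᵥ x) := by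
  obtain ⟨hrow, hcol⟩ := mem_doublyStochastic_iff_mem_rowStochastic_and_mem_colStochastic.1 hD
  obtain rfl | hx0 := eq_or_ne x 0
  · rw [mulVec_zero]
  have hy : 0 ≤ D *ᵥ x := nonneg_mulVec_of_mem_colStochastic hcol hx
  have hy0 : D *ᵥ x ≠ 0 := mulVec_ne_zero_of_mem_colStochastic hcol hx hx0
  unfold renyiEntropy
  split_ifs with h0 h1 htop
  · refine Real.log_le_log ?_ (by exact_mod_cast ncard_support_le_ncard_support_mulVec hD hx)
    exact_mod_cast (Set.ncard_pos).2 (Function.support_nonempty_iff.2 hx0)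
  · exact sum_map_le_sum_map_mulVec_of_concaveOn hD Real.concaveOn_negMulLog hx
  · exact neg_le_neg (Real.log_le_log (iSup_pos_of_nonneg_of_ne_zero hy hy0)
      (iSup_mulVec_le_of_mem_rowStochastic hrow x))
  · have hpos : 0 < α.toReal := ENNReal.toReal_pos h0 htop
    have hne : α.toReal ≠ 1 := mt (ENNReal.toReal_eq_one_iff α).1 h1
    obtain hlt | hgt := hne.lt_or_gt
    · refine mul_le_mul_of_nonneg_left (Real.log_le_log ?_ ?_) (inv_nonneg.2 (by linarith))
      · exact sum_rpow_pos_of_nonneg_of_ne_zero hx hx0 _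
      · exact sum_map_le_sum_map_mulVec_of_concaveOn hD
          (Real.concaveOn_rpow hpos.le hlt.le) hx
    · refine mul_le_mul_of_nonpos_left (Real.log_le_log ?_ ?_) (inv_nonpos.2 (by linarith))
      · exact sum_rpow_pos_of_nonneg_of_ne_zero hy hy0 _
      · exact sum_map_mulVec_le_of_convexOn hD (convexOn_rpow hgt.le) hx

end RenyiEntropy

section DoublyStochasticMap

variable {ι 𝕜 : Type*} [Fintype ι] [DecidableEq ι] [RCLike 𝕜]

/-- A doubly stochastic map on matrices: a positive, trace preserving and unital linear map.
Complete positivity is not required. -/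
structure IsDoublyStochasticMap (E : Matrix ι ι 𝕜 →ₗ[𝕜] Matrix ι ι 𝕜) : Prop where
  posSemidef_map {A : Matrix ι ι 𝕜} : A.PosSemidef → (E A).PosSemidef
  trace_map (A : Matrix ι ι 𝕜) : (E A).trace = A.trace
  map_one : E 1 = 1

variable {E F : Matrix ι ι 𝕜 →ₗ[𝕜] Matrix ι ι 𝕜}

theorem IsDoublyStochasticMap.comp (hE : IsDoublyStochasticMap E) (hF : IsDoublyStochasticMap F) :
    IsDoublyStochasticMap (E ∘ₗ F) where
  posSemidef_map hA := hE.posSemidef_map (hF.posSemidef_map hA)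
  trace_map A := (hE.trace_map (F A)).trans (hF.trace_map A)
  map_one := by rw [LinearMap.comp_apply, hF.map_one, hE.map_one]

theorem isDoublyStochasticMap_conjStarAlgAut (U : unitaryGroup ι 𝕜) :
    IsDoublyStochasticMap
      (Unitary.conjStarAlgAut 𝕜 (Matrix ι ι 𝕜) U).toAlgEquiv.toLinearMap where
  posSemidef_map hA := hA.mul_mul_conjTranspose_same (U : Matrix ι ι 𝕜)
  trace_map A := by
    change ((U : Matrix ι ι 𝕜) * A * star (U : Matrix ι ι 𝕜)).trace = A.trace
    rw [trace_mul_cycle, Unitary.coe_star_mul_self, one_mul]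
  map_one := map_one (Unitary.conjStarAlgAut 𝕜 (Matrix ι ι 𝕜) U)

/-- The transition matrix of a map on matrices with respect to the standard basis: its `(i, j)`
entry is `⟨i| E(|j⟩⟨j|) |i⟩`. -/
def transitionMatrix (E : Matrix ι ι 𝕜 →ₗ[𝕜] Matrix ι ι 𝕜) : Matrix ι ι ℝ :=
  of fun i j => RCLike.re (E (single j j 1) i i)

theorem transitionMatrix_mulVec (E : Matrix ι ι 𝕜 →ₗ[𝕜] Matrix ι ι 𝕜) (x : ι → ℝ) (i : ι) :
    (transitionMatrix E *ᵥ x) i = RCLike.re (E (diagonal (RCLike.ofReal ∘ x)) i i) := by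
  have hdiag : diagonal (RCLike.ofReal ∘ x) = ∑ j, (x j : 𝕜) • single j j (1 : 𝕜) := by
    simp only [← sum_single_eq_diagonal, smul_single, smul_eq_mul, mul_one, Function.comp_apply]
  simp [hdiag, transitionMatrix, mulVec, dotProduct, Matrix.sum_apply, RCLike.smul_re, mul_comm,
    -smul_single]

theorem IsDoublyStochasticMap.transitionMatrix_mem_doublyStochastic
    (hE : IsDoublyStochasticMap E) : transitionMatrix E ∈ doublyStochastic ℝ ι := by
  refine mem_doublyStochastic_iff_sum.2 ⟨fun i j => ?_, fun i => ?_, fun j => ?_⟩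
  · have hproj : (single j j (1 : 𝕜)).PosSemidef := by
      rw [← diagonal_single]
      exact PosSemidef.diagonal (Pi.single_nonneg.2 zero_le_one)
    exact (RCLike.nonneg_iff.1 (hE.posSemidef_map hproj).diag_nonneg).1
  · calc ∑ j, transitionMatrix E i j
        = RCLike.re (E (∑ j, single j j 1) i i) := by
          simp [transitionMatrix, Matrix.sum_apply]
      _ = 1 := by simp [sum_single_one, hE.map_one]
  · calc ∑ i, transitionMatrix E i j
        = RCLike.re (E (single j j 1)).trace := by simp [transitionMatrix, trace]
      _ = 1 := by simp [hE.trace_map]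

theorem IsDoublyStochasticMap.exists_eigenvalues_eq_mulVec (hE : IsDoublyStochasticMap E)
    {A : Matrix ι ι 𝕜} (hA : A.IsHermitian) (hEA : (E A).IsHermitian) :
    ∃ D ∈ doublyStochastic ℝ ι, hEA.eigenvalues = D *ᵥ hA.eigenvalues := by
  let V := (Unitary.conjStarAlgAut 𝕜 (Matrix ι ι 𝕜) hA.eigenvectorUnitary).toAlgEquiv.toLinearMap
  let W := (Unitary.conjStarAlgAut 𝕜 (Matrix ι ι 𝕜)
    (star hEA.eigenvectorUnitary)).toAlgEquiv.toLinearMap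
  have hstoch : IsDoublyStochasticMap (W ∘ₗ E ∘ₗ V) :=
    (isDoublyStochasticMap_conjStarAlgAut _).comp
      (hE.comp (isDoublyStochasticMap_conjStarAlgAut _))
  have hspec : (W ∘ₗ E ∘ₗ V) (diagonal (RCLike.ofReal ∘ hA.eigenvalues)) =
      diagonal (RCLike.ofReal ∘ hEA.eigenvalues) :=
    calc W (E (V (diagonal (RCLike.ofReal ∘ hA.eigenvalues))))
        = W (E A) := congrArg (W ∘ E) hA.spectral_theorem.symm
      _ = _ := hEA.conjStarAlgAut_star_eigenvectorUnitary
  refine ⟨_, hstoch.transitionMatrix_mem_doublyStochastic, funext fun i => ?_⟩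
  rw [transitionMatrix_mulVec, hspec]
  simp

end DoublyStochasticMap

variable {d n : ℕ} [Fact d.Prime]

section Entropy

variable {ρ : Mat d n}

theorem renyiEnt_eq_renyiEntropy_eigenvalues (hρ : ρ.IsHermitian) (α : ℝ≥0∞) :
    renyiEnt α ρ = renyiEntropy α hρ.eigenvalues := by
  have hrank : ρ.rank = (Function.support hρ.eigenvalues).ncard := by
    rw [hρ.rank_eq_card_non_zero_eigs, Set.ncard_eq_toFinset_card', Set.toFinset_card]
    exact Fintype.card_congr (.refl _)
  simp only [renyiEnt, dif_pos hρ, renyiEntropy, hrank, Real.negMulLog, neg_mul,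
    Finset.sum_neg_distrib]

theorem IsDoublyStochasticMap.renyiEnt_le_renyiEnt_map {E : Mat d n →ₗ[ℂ] Mat d n}
    (hE : IsDoublyStochasticMap E) (hρ : ρ.PosSemidef) (α : ℝ≥0∞) :
    renyiEnt α ρ ≤ renyiEnt α (E ρ) := by
  have hEρ : (E ρ).IsHermitian := (hE.posSemidef_map hρ).isHermitian
  obtain ⟨D, hD, heig⟩ := hE.exists_eigenvalues_eq_mulVec hρ.isHermitian hEρ
  rw [renyiEnt_eq_renyiEntropy_eigenvalues hρ.isHermitian,
    renyiEnt_eq_renyiEntropy_eigenvalues hEρ, heig]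
  exact renyiEntropy_le_renyiEntropy_mulVec hD hρ.eigenvalues_nonneg α

end Entropy

section PartialTrace

theorem ptrB_eq_sum_submatrix (M : Matrix (QV d n × QV d n) (QV d n × QV d n) ℂ) :
    ptrB M = ∑ l, M.submatrix (·, l) (·, l) := by
  ext k k'
  simp [ptrB, Matrix.sum_apply]

theorem posSemidef_ptrB {M : Matrix (QV d n × QV d n) (QV d n × QV d n) ℂ}
    (hM : M.PosSemidef) : (ptrB M).PosSemidef := by
  rw [ptrB_eq_sum_submatrix]
  exact posSemidef_sum _ fun l _ => hM.submatrix (·, l)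

theorem trace_ptrB (M : Matrix (QV d n × QV d n) (QV d n × QV d n) ℂ) :
    (ptrB M).trace = M.trace :=
  (Fintype.sum_prod_type fun k => M k k).symm

end PartialTrace

section BeamSplitter

/-- The classical beam splitter `(x, y) ↦ (s x + t y, t x - s y)`. It is an involution since
`s ^ 2 + t ^ 2 = 1`, and on `ℤ_d^n × ℤ_d^n` it is the permutation of the computational basis
underlying `bsU`. -/
def beamSplitter {R M : Type*} [CommRing R] [AddCommGroup M] [Module R M] {s t : R}
    (hst : s ^ 2 + t ^ 2 = 1) : Equiv.Perm (M × M) :=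
  Function.Involutive.toPerm (fun x => (s • x.1 + t • x.2, t • x.1 - s • x.2)) fun x => by
    ext1
    · linear_combination (norm := module) hst • x.1
    · linear_combination (norm := module) hst • x.2

variable {s t : ZMod d}

theorem bsU_eq_permMatrix (hst : s ^ 2 + t ^ 2 = 1) :
    bsU d n s t = (beamSplitter hst).permMatrix ℂ := by
  ext x y
  simp only [Equiv.Perm.permMatrix, PEquiv.toMatrix_apply, Equiv.toPEquiv_apply,
    Option.mem_some_iff]
  exact if_congr (beamSplitter hst).eq_symm_apply rfl rfl

theorem bsU_mul_mul_conjTranspose (hst : s ^ 2 + t ^ 2 = 1)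
    (M : Matrix (QV d n × QV d n) (QV d n × QV d n) ℂ) :
    bsU d n s t * M * (bsU d n s t)ᴴ = M.submatrix (beamSplitter hst) (beamSplitter hst) := by
  rw [bsU_eq_permMatrix hst, conjTranspose_permMatrix, PEquiv.toMatrix_toPEquiv_mul,
    PEquiv.mul_toMatrix_toPEquiv, submatrix_submatrix]
  rfl

end BeamSplitter

section Convolution

variable {ρ σ : Mat d n}

theorem posSemidef_bsConv (s t : ZMod d) (hρ : ρ.PosSemidef) (hσ : σ.PosSemidef) :
    (bsConv d n s t ρ σ).PosSemidef :=
  posSemidef_ptrB ((hρ.kronecker hσ).mul_mul_conjTranspose_same (bsU d n s t))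

variable {s t : ZMod d}

theorem trace_bsConv (hst : s ^ 2 + t ^ 2 = 1) (ρ σ : Mat d n) :
    (bsConv d n s t ρ σ).trace = ρ.trace * σ.trace :=
  calc (bsConv d n s t ρ σ).trace
      = ((kron ρ σ).submatrix (beamSplitter hst) (beamSplitter hst)).trace := by
        rw [bsConv, trace_ptrB, bsU_mul_mul_conjTranspose hst]
    _ = (kron ρ σ).trace := Equiv.sum_comp (beamSplitter hst) fun x => kron ρ σ x x
    _ = ρ.trace * σ.trace := trace_kronecker ρ σ

theorem bsConv_one (hs : s ≠ 0) (hst : s ^ 2 + t ^ 2 = 1) (σ : Mat d n) :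
    bsConv d n s t 1 σ = σ.trace • 1 := by
  ext k k'
  have hentry : bsConv d n s t 1 σ k k' = ∑ l, (1 : Mat d n) (s • k + t • l) (s • k' + t • l) *
      σ (t • k - s • l) (t • k' - s • l) := by
    rw [bsConv, bsU_mul_mul_conjTranspose hst]
    rfl
  have hsmul : Function.Injective (s • · : QV d n → QV d n) := smul_right_injective _ hs
  rw [hentry]
  obtain rfl | hk := eq_or_ne k k'
  · have hbij : Function.Bijective fun l : QV d n => t • k - s • l :=
      Finite.injective_iff_bijective.1 (sub_right_injective.comp hsmul)
    simpa [trace] using hbij.sum_comp fun x => σ x x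
  · simp [one_apply, hk, hsmul.eq_iff]

theorem isState_bsConv (hst : s ^ 2 + t ^ 2 = 1) (hρ : IsState d n ρ) (hσ : IsState d n σ) :
    IsState d n (bsConv d n s t ρ σ) :=
  ⟨posSemidef_bsConv s t hρ.1 hσ.1, by rw [trace_bsConv hst, hρ.2, hσ.2, one_mul]⟩

theorem isState_bsIter (hst : s ^ 2 + t ^ 2 = 1) (hρ : IsState d n ρ) (N : ℕ) :
    IsState d n (bsIter d n s t N ρ) := by
  induction N with
  | zero => exact hρ
  | succ N ih => exact isState_bsConv hst ih hρ

/-- Convolution by a fixed right factor, `ρ ↦ ρ ⊠ σ`, as a linear map. -/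
noncomputable def bsConvRight (s t : ZMod d) (σ : Mat d n) : Mat d n →ₗ[ℂ] Mat d n where
  toFun ρ := bsConv d n s t ρ σ
  map_add' ρ₁ ρ₂ := by
    have hkron : kron (ρ₁ + ρ₂) σ = kron ρ₁ σ + kron ρ₂ σ := add_kronecker ρ₁ ρ₂ σ
    ext k k'
    simp [bsConv, hkron, mul_add, add_mul, ptrB, Finset.sum_add_distrib]
  map_smul' c ρ := by
    have hkron : kron (c • ρ) σ = c • kron ρ σ := smul_kronecker c ρ σ
    ext k k'
    simp [bsConv, hkron, ptrB, Finset.mul_sum]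

theorem isDoublyStochasticMap_bsConvRight (hs : s ≠ 0) (hst : s ^ 2 + t ^ 2 = 1)
    (hσ : IsState d n σ) : IsDoublyStochasticMap (bsConvRight s t σ) where
  posSemidef_map hρ := posSemidef_bsConv s t hρ hσ.1
  trace_map ρ := (trace_bsConv hst ρ σ).trans (by rw [hσ.2, mul_one])
  map_one := (bsConv_one hs hst σ).trans (by rw [hσ.2, one_smul])

theorem renyiEnt_le_renyiEnt_bsConv (hs : s ≠ 0) (hst : s ^ 2 + t ^ 2 = 1) (hρ : ρ.PosSemidef)
    (hσ : IsState d n σ) (α : ℝ≥0∞) : renyiEnt α ρ ≤ renyiEnt α (bsConv d n s t ρ σ) :=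
  (isDoublyStochasticMap_bsConvRight hs hst hσ).renyiEnt_le_renyiEnt_map hρ α

end Convolution

end PaperQI

namespace PaperQI

/-- Second law of thermodynamics for quantum convolution: for every
state `ρ`, every `α ∈ [0,∞]` and every `N ≥ 0`, `H_α(⊠^{N+1} ρ) ≥ H_α(⊠^N ρ)`. -/
theorem statement18 (d n : ℕ) [Fact (Nat.Prime d)] (hd : Odd d) (hn : 1 ≤ n)
    (s t : ZMod d) (hs : s ≠ 0) (ht : t ≠ 0) (hst : s ^ 2 + t ^ 2 = 1)
    (ρ : Mat d n) (hρ : IsState d n ρ) (α : ℝ≥0∞) (N : ℕ) :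
    renyiEnt α (bsIter d n s t N ρ) ≤ renyiEnt α (bsIter d n s t (N + 1) ρ) := by
  have hiter : IsState d n (bsIter d n s t N ρ) := isState_bsIter hst hρ N
  exact renyiEnt_le_renyiEnt_bsConv hs hst hiter.1 hρ α

end PaperQI
end
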